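/- For θ ∈ L²(𝕋^{d+1}), the equation ∂_s β(ξ,s) − (A(s)β(·,s))(ξ) = θ(ξ,s) has a time-periodic solution β ∈ L²(𝕋^{d+1}) ∩ H¹((0,1); L²(𝕋^d)) if and only if ∫₀¹ ∫_{𝕋^d} θ(ξ,s) dξ ds = 0; moreover, any two such solutions differ by an additive constant. -/

import Mathlib

open MeasureTheory

noncomputable section

/-- The periodicity cell `[0,1)^d`, identified with the torus `𝕋^d`. -/
def cube (d : ℕ) : Set (Fin d → ℝ) := Set.univ.pi fun _ => Set.Ico (0 : ℝ) 1

/-- The operator `A(s)` applied pointwise. -/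
def Aop {d : ℕ} (a : (Fin d → ℝ) → ℝ) (μ : (Fin d → ℝ) → (Fin d → ℝ) → ℝ → ℝ)
    (s : ℝ) (v : (Fin d → ℝ) → ℝ) (ξ : Fin d → ℝ) : ℝ :=
  ∫ η, a (ξ - η) * μ ξ η s * (v η - v ξ)

/-- `β` is a time-periodic solution, in `L²(𝕋^{d+1}) ∩ H¹((0,1); L²(𝕋^d))`, of
`∂_s β - A(s)β = θ` (in the equivalent integrated-in-time formulation). -/
def IsCellSol {d : ℕ} (a : (Fin d → ℝ) → ℝ) (μ : (Fin d → ℝ) → (Fin d → ℝ) → ℝ → ℝ)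
    (θ : (Fin d → ℝ) → ℝ → ℝ) (β : (Fin d → ℝ) → ℝ → ℝ) : Prop :=
  Measurable (fun p : (Fin d → ℝ) × ℝ => β p.1 p.2) ∧
  (∀ ξ s, ∀ k : Fin d → ℤ, β (ξ + fun i => (k i : ℝ)) s = β ξ s) ∧
  (∀ ξ s, β ξ (s + 1) = β ξ s) ∧
  IntegrableOn (fun p : (Fin d → ℝ) × ℝ => (β p.1 p.2) ^ 2)
    (cube d ×ˢ Set.Ioo (0 : ℝ) 1) ∧
  (∀ᵐ ξ ∂(volume : Measure (Fin d → ℝ)), ∀ s ∈ Set.Icc (0 : ℝ) 1,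
    β ξ s = β ξ 0 + ∫ τ in (0 : ℝ)..s, (Aop a μ τ (fun η => β η τ) ξ + θ ξ τ))

section


/-- coordinatewise fractional part -/
def frc {d : ℕ} (ξ : Fin d → ℝ) : Fin d → ℝ := fun i => Int.fract (ξ i)

def kap (d : ℕ) : Measure (Fin d → ℝ) := volume.restrict (cube d)

def nuQ (d : ℕ) : Measure ((Fin d → ℝ) × ℝ) :=
  (kap d).prod (volume.restrict (Set.Ioo (0:ℝ) 1))

def SPer {d : ℕ} (f : (Fin d → ℝ) × ℝ → ℝ) : Prop :=
  ∀ ξ s, ∀ k : Fin d → ℤ, f (ξ + fun i => (k i : ℝ), s) = f (ξ, s)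

lemma nuQ_eq (d : ℕ) : nuQ d = volume.restrict (cube d ×ˢ Set.Ioo (0:ℝ) 1) := by
  rw [nuQ, kap, Measure.prod_restrict, Measure.volume_eq_prod]

lemma measurableSet_cube (d : ℕ) : MeasurableSet (cube d) :=
  MeasurableSet.univ_pi fun _ => measurableSet_Ico

lemma volume_cube (d : ℕ) : volume (cube d) = 1 := by
  rw [cube, volume_pi_pi]; simp

instance (d : ℕ) : IsProbabilityMeasure (kap d) := ⟨by simp [kap, volume_cube]⟩

instance : IsProbabilityMeasure (volume.restrict (Set.Ioo (0:ℝ) 1)) := ⟨by simp⟩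

instance (d : ℕ) : IsProbabilityMeasure (nuQ d) := by unfold nuQ; infer_instance

lemma measurable_frc {d : ℕ} : Measurable (frc (d := d)) :=
  measurable_pi_lambda _ fun i => measurable_fract.comp (measurable_pi_apply i)

lemma frc_eq {d : ℕ} (ξ : Fin d → ℝ) : frc ξ = ξ + fun i => ((-⌊ξ i⌋ : ℤ) : ℝ) := by
  ext i; simp [frc, Int.fract, sub_eq_add_neg]

lemma frc_add_int {d : ℕ} (ξ : Fin d → ℝ) (k : Fin d → ℤ) :
    frc (ξ + fun i => (k i : ℝ)) = frc ξ := by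
  ext i; simp [frc]

lemma frc_of_mem {d : ℕ} {ξ : Fin d → ℝ} (h : ξ ∈ cube d) : frc ξ = ξ := by
  ext i
  have := h i (Set.mem_univ i)
  exact Int.fract_eq_self.2 ⟨this.1, this.2⟩

lemma frc_mem {d : ℕ} (ξ : Fin d → ℝ) : frc ξ ∈ cube d := fun _ _ =>
  ⟨Int.fract_nonneg _, Int.fract_lt_one _⟩

lemma SPer.frc {d : ℕ} {f : (Fin d → ℝ) × ℝ → ℝ} (hf : SPer f) (ξ : Fin d → ℝ) (s : ℝ) :
    f (frc ξ, s) = f (ξ, s) := by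
  rw [frc_eq]; exact hf ξ s _

lemma cube_fund (d : ℕ) : IsAddFundamentalDomain
    (Submodule.span ℤ (Set.range (Pi.basisFun ℝ (Fin d)))).toAddSubgroup (cube d)
    (volume : Measure (Fin d → ℝ)) := by
  have := ZSpan.isAddFundamentalDomain' (Pi.basisFun ℝ (Fin d)) volume
  rwa [ZSpan.fundamentalDomain_pi_basisFun] at this

lemma lattice_int {d : ℕ} (g : (Submodule.span ℤ (Set.range (Pi.basisFun ℝ (Fin d)))).toAddSubgroup) :
    ∃ k : Fin d → ℤ, (g : Fin d → ℝ) = fun i => (k i : ℝ) := by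
  have hg : (g : Fin d → ℝ) ∈ Submodule.span ℤ (Set.range (Pi.basisFun ℝ (Fin d))) := g.2
  rw [Module.Basis.mem_span_iff_repr_mem] at hg
  choose k hk using hg
  exact ⟨k, by ext i; simpa using (hk i).symm⟩

instance (d : ℕ) :
    Countable (Submodule.span ℤ (Set.range (Pi.basisFun ℝ (Fin d)))).toAddSubgroup := by
  choose k hk using lattice_int (d := d)
  refine Function.Injective.countable (f := k) ?_
  intro g h hgh
  apply Subtype.ext
  rw [hk g, hk h, hgh]

open scoped Pointwise in
lemma frc_shift_mp {d : ℕ} (z : Fin d → ℝ) :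
    MeasurePreserving (fun ξ => frc (ξ + z)) (kap d) (kap d) := by
  refine ⟨measurable_frc.comp (measurable_id.add_const z), ?_⟩
  ext B hB
  have hm : Measurable (fun ξ : Fin d → ℝ => frc (ξ + z)) :=
    measurable_frc.comp (measurable_id.add_const z)
  rw [Measure.map_apply hm hB, kap, Measure.restrict_apply (hm hB), Measure.restrict_apply hB]
  have hA : MeasurableSet (frc (d := d) ⁻¹' B) := measurable_frc hB
  have h1 : (fun ξ : Fin d → ℝ => frc (ξ + z)) ⁻¹' B ∩ cube d
      = (fun ξ => z + ξ) ⁻¹' (frc (d := d) ⁻¹' B ∩ (z +ᵥ cube d)) := by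
    ext ξ
    simp [Set.mem_vadd_set_iff_neg_vadd_mem, add_comm]
  have h2 : B ∩ cube d = frc (d := d) ⁻¹' B ∩ cube d := by
    ext ξ
    simp only [Set.mem_inter_iff, Set.mem_preimage, and_congr_left_iff]
    intro h; rw [frc_of_mem h]
  rw [h1, h2, measure_preimage_add]
  refine ((cube_fund d).vadd_of_comm z).measure_set_eq (cube_fund d) hA ?_
  intro g
  obtain ⟨k, hk⟩ := lattice_int g
  ext ξ
  simp only [Set.mem_preimage]
  rw [show (g +ᵥ ξ : Fin d → ℝ) = ξ + fun i => (k i : ℝ) by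
    rw [← hk, add_comm]; rfl, frc_add_int]

open scoped Pointwise in
lemma ae_of_ae_cube {d : ℕ} {P : (Fin d → ℝ) → Prop}
    (hP : ∀ ξ, ∀ k : Fin d → ℤ, P (ξ + fun i => (k i : ℝ)) ↔ P ξ)
    (h : ∀ᵐ ξ ∂(kap d), P ξ) : ∀ᵐ ξ ∂(volume : Measure (Fin d → ℝ)), P ξ := by
  rw [ae_iff] at h ⊢
  refine (cube_fund d).measure_zero_of_invariant _ ?_ ?_
  · intro g
    obtain ⟨k, hk⟩ := lattice_int g
    ext ξ
    rw [Set.mem_vadd_set_iff_neg_vadd_mem]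
    simp only [Set.mem_setOf_eq]
    rw [show (-g +ᵥ ξ : Fin d → ℝ) = ξ + fun i => ((-k) i : ℝ) by
      have : (fun i => (((-k) i : ℤ) : ℝ)) = -(g : Fin d → ℝ) := by
        rw [hk]; ext i; simp
      rw [show (fun i => ((-k) i : ℝ)) = -(g : Fin d → ℝ) from by rw [hk]; ext i; simp]
      rw [add_comm]; rfl]
    have := hP ξ (-k)
    simp only [Pi.neg_apply, Int.cast_neg] at this
    simpa using not_congr this
  · rw [kap, Measure.restrict_apply₀'] at h
    · exact h
    · exact (measurableSet_cube d).nullMeasurableSet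

/-- space shift on the torus times time -/
def shQ {d : ℕ} (z : Fin d → ℝ) (p : (Fin d → ℝ) × ℝ) : (Fin d → ℝ) × ℝ := (frc (p.1 + z), p.2)

lemma measurable_shQ {d : ℕ} : Measurable (fun q : (Fin d → ℝ) × (Fin d → ℝ) × ℝ => shQ q.1 q.2) :=
  (measurable_frc.comp (measurable_snd.fst.add measurable_fst)).prodMk measurable_snd.snd

lemma shQ_mp {d : ℕ} (z : Fin d → ℝ) : MeasurePreserving (shQ z) (nuQ d) (nuQ d) :=
  (frc_shift_mp z).prod (MeasurePreserving.id _)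

lemma shQ_prod_mp {d : ℕ} (α : Measure (Fin d → ℝ)) [IsProbabilityMeasure α] :
    MeasurePreserving (fun q : (Fin d → ℝ) × (Fin d → ℝ) × ℝ => shQ q.1 q.2)
      (α.prod (nuQ d)) (nuQ d) := by
  have h : MeasurePreserving (fun q : (Fin d → ℝ) × (Fin d → ℝ) × ℝ => (q.1, shQ q.1 q.2))
      (α.prod (nuQ d)) (α.prod (nuQ d)) :=
    (MeasurePreserving.id α).skew_product (g := shQ) measurable_shQ
      (Filter.Eventually.of_forall fun z => (shQ_mp z).map_eq)
  exact measurePreserving_snd.comp h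

lemma shQ_flip_mp {d : ℕ} (α : Measure (Fin d → ℝ)) [IsProbabilityMeasure α]
    (hα : MeasurePreserving (fun z => -z) α α) :
    MeasurePreserving (fun q : (Fin d → ℝ) × (Fin d → ℝ) × ℝ => (-q.1, shQ q.1 q.2))
      (α.prod (nuQ d)) (α.prod (nuQ d)) :=
  hα.skew_product (g := shQ) measurable_shQ
      (Filter.Eventually.of_forall fun z => (shQ_mp z).map_eq)

/-! ### One dimensional lemmas -/

lemma energy_one {u g : ℝ → ℝ} (hg : IntegrableOn g (Set.Ioo 0 1))
    (hu : ∀ s ∈ Set.Icc (0:ℝ) 1, u s = u 0 + ∫ τ in (0:ℝ)..s, g τ) (h1 : u 1 = u 0) :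
    ∫ s in Set.Ioo (0:ℝ) 1, u s * g s = 0 := by
  have hgi : IntervalIntegrable g volume 0 1 := by
    rw [intervalIntegrable_iff_integrableOn_Ioo_of_le zero_le_one]; exact hg
  have hac := hgi.absolutelyContinuousOnInterval_intervalIntegral (c := 0) (by simp)
  set w : ℝ → ℝ := fun s => u 0 + ∫ τ in (0:ℝ)..s, g τ with hw
  have hwac : AbsolutelyContinuousOnInterval w 0 1 := by
    have hc : AbsolutelyContinuousOnInterval (fun _ : ℝ => u 0) 0 1 :=
      (LipschitzWith.const (u 0)).lipschitzOnWith.absolutelyContinuousOnInterval (K := 0)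
    exact hc.add hac
  have key := hwac.integral_deriv_mul_eq_sub hwac
  have hw1 : w 1 = w 0 := by
    have e1 := hu 1 (by simp)
    have e0 := hu 0 (by simp)
    simp only [hw]; rw [← e1, ← e0, h1]
  rw [hw1, sub_self] at key
  have : ∫ x in (0:ℝ)..1, deriv w x * w x + w x * deriv w x = ∫ x in (0:ℝ)..1, 2 * (u x * g x) := by
    apply intervalIntegral.integral_congr_ae
    filter_upwards [hgi.ae_hasDerivAt_integral] with x hx hx2
    have hx3 : x ∈ Set.uIcc (0:ℝ) 1 := Set.uIoc_subset_uIcc hx2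
    have hd : HasDerivAt w (g x) x := ((hx hx3) 0 (by simp)).const_add (u 0)
    rw [hd.deriv, hu x (by simpa using hx3)]
    ring
  rw [this, intervalIntegral.integral_const_mul, intervalIntegral.integral_of_le zero_le_one,
    integral_Ioc_eq_integral_Ioo] at key
  linarith

/-- kernel of the periodic resolvent of `d/ds + lam` -/
def rker (lam s τ : ℝ) : ℝ :=
  Real.exp (lam * (τ - s)) * (1 / (Real.exp lam - 1) + if τ ≤ s then 1 else 0)

def rsol (lam : ℝ) (G : ℝ → ℝ) (s : ℝ) : ℝ :=
  ∫ τ in Set.Ioo (0:ℝ) 1, rker lam (Int.fract s) τ * G τ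

lemma rsol_formula {lam : ℝ} {G : ℝ → ℝ} (hG : IntegrableOn G (Set.Ioo 0 1)) {s : ℝ}
    (hs : s ∈ Set.Icc (0:ℝ) 1) :
    ∫ τ in Set.Ioo (0:ℝ) 1, rker lam s τ * G τ =
      Real.exp (-lam * s) * ((∫ τ in (0:ℝ)..1, Real.exp (lam * τ) * G τ) / (Real.exp lam - 1)
        + ∫ τ in (0:ℝ)..s, Real.exp (lam * τ) * G τ) := by
  have hGi : IntervalIntegrable G volume 0 1 := by
    rw [intervalIntegrable_iff_integrableOn_Ioo_of_le zero_le_one]; exact hG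
  have hEi : IntervalIntegrable (fun τ => Real.exp (lam * τ) * G τ) volume 0 1 :=
    hGi.continuousOn_mul (by fun_prop)
  have hE : IntegrableOn (fun τ => Real.exp (lam * τ) * G τ) (Set.Ioc 0 1) := by
    rwa [intervalIntegrable_iff_integrableOn_Ioc_of_le zero_le_one] at hEi
  rw [← integral_Ioc_eq_integral_Ioo]
  have h1 : ∀ τ, rker lam s τ * G τ = Real.exp (-lam * s) * (1 / (Real.exp lam - 1)) *
      (Real.exp (lam * τ) * G τ) + Real.exp (-lam * s) *
      (Set.Iic s).indicator (fun τ => Real.exp (lam * τ) * G τ) τ := by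
    intro τ
    rw [rker, show lam * (τ - s) = -lam * s + lam * τ by ring, Real.exp_add]
    by_cases h : τ ≤ s
    · simp [h]; ring
    · simp [h]; ring
  simp_rw [h1]
  rw [integral_add (hE.const_mul _) ((hE.indicator measurableSet_Iic).const_mul _),
    integral_const_mul, integral_const_mul, setIntegral_indicator measurableSet_Iic,
    intervalIntegral.integral_of_le zero_le_one, intervalIntegral.integral_of_le hs.1]
  have : Set.Ioc (0:ℝ) 1 ∩ Set.Iic s = Set.Ioc 0 s := by
    ext x; simp only [Set.mem_inter_iff, Set.mem_Ioc, Set.mem_Iic]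
    constructor
    · rintro ⟨⟨a, b⟩, c⟩; exact ⟨a, c⟩
    · rintro ⟨a, c⟩; exact ⟨⟨a, c.trans hs.2⟩, c⟩
  rw [this]; ring

lemma rsol_ode {lam : ℝ} (hlam : 0 < lam) {G : ℝ → ℝ} (hG : IntegrableOn G (Set.Ioo 0 1)) :
    ContinuousOn (rsol lam G) (Set.Icc 0 1) ∧
    ∀ s ∈ Set.Icc (0:ℝ) 1, rsol lam G s = rsol lam G 0 +
      ∫ τ in (0:ℝ)..s, (G τ - lam * rsol lam G τ) := by
  have hGi : IntervalIntegrable G volume 0 1 := by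
    rw [intervalIntegrable_iff_integrableOn_Ioo_of_le zero_le_one]; exact hG
  have hEi : IntervalIntegrable (fun τ => Real.exp (lam * τ) * G τ) volume 0 1 :=
    hGi.continuousOn_mul (by fun_prop)
  set I := ∫ τ in (0:ℝ)..1, Real.exp (lam * τ) * G τ with hI
  set w : ℝ → ℝ := fun s => I / (Real.exp lam - 1) + ∫ τ in (0:ℝ)..s, Real.exp (lam * τ) * G τ with hw
  have hexp : Real.exp lam - 1 ≠ 0 := by
    have := Real.one_lt_exp_iff.2 hlam
    linarith
  have hform : ∀ s ∈ Set.Icc (0:ℝ) 1, rsol lam G s = Real.exp (-lam * s) * w s := by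
    intro s hs
    rcases eq_or_lt_of_le hs.2 with h | h
    · subst h
      have e0 := rsol_formula (lam := lam) hG (s := 0) (by simp)
      rw [rsol, Int.fract_one, e0]
      simp only [hw, ← hI]
      have : Real.exp (-lam * 1) * (I / (Real.exp lam - 1) + I) = I / (Real.exp lam - 1) := by
        rw [mul_one, Real.exp_neg]
        field_simp
        ring
      simpa using this.symm
    · rw [rsol, Int.fract_eq_self.2 ⟨hs.1, h⟩, rsol_formula hG hs]
  have hac := hEi.absolutelyContinuousOnInterval_intervalIntegral (c := 0) (by simp)
  have hwac : AbsolutelyContinuousOnInterval w 0 1 := by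
    have hc : AbsolutelyContinuousOnInterval (fun _ : ℝ => I / (Real.exp lam - 1)) 0 1 :=
      (LipschitzWith.const _).lipschitzOnWith.absolutelyContinuousOnInterval (K := 0)
    exact hc.add hac
  have heac : AbsolutelyContinuousOnInterval (fun s => Real.exp (-lam * s)) 0 1 :=
    ContDiffOn.absolutelyContinuousOnInterval (by fun_prop)
  refine ⟨?_, ?_⟩
  · refine ContinuousOn.congr (f := fun s => Real.exp (-lam * s) * w s) ?_ hform
    have := hwac.continuousOn
    rw [Set.uIcc_of_le zero_le_one] at this
    exact ContinuousOn.mul (by fun_prop) this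
  · intro s hs
    have hsub : Set.uIcc 0 s ⊆ Set.uIcc (0:ℝ) 1 := by
      rw [Set.uIcc_of_le hs.1, Set.uIcc_of_le zero_le_one]; exact Set.Icc_subset_Icc_right hs.2
    have key := (heac.mono hsub).integral_deriv_mul_eq_sub (hwac.mono hsub)
    rw [hform s hs, hform 0 (by simp), ← sub_eq_iff_eq_add', ← key]
    apply intervalIntegral.integral_congr_ae
    filter_upwards [hEi.ae_hasDerivAt_integral] with x hx hx2
    have hx3 : x ∈ Set.uIcc (0:ℝ) 1 := hsub (Set.uIoc_subset_uIcc hx2)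
    have hd : HasDerivAt w (Real.exp (lam * x) * G x) x := ((hx hx3) 0 (by simp)).const_add _
    have he : HasDerivAt (fun s => Real.exp (-lam * s)) (Real.exp (-lam * x) * -lam) x := by
      have := ((hasDerivAt_id x).const_mul (-lam)).exp
      simpa using this
    rw [hd.deriv, he.deriv, hform x (by simpa using hx3)]
    have : Real.exp (-lam * x) * Real.exp (lam * x) = 1 := by
      rw [← Real.exp_add]; simp
    linear_combination (G x) * this

lemma rsol_per (lam : ℝ) (G : ℝ → ℝ) (s : ℝ) : rsol lam G (s + 1) = rsol lam G s := by
  simp [rsol]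

lemma rsol_bound {lam : ℝ} (hlam : 0 < lam) {G : ℝ → ℝ}
    (hG : MemLp G 2 (volume.restrict (Set.Ioo (0:ℝ) 1))) :
    Integrable (fun s => rsol lam G s ^ 2) (volume.restrict (Set.Ioo (0:ℝ) 1)) ∧
    lam ^ 2 * ∫ s in Set.Ioo (0:ℝ) 1, rsol lam G s ^ 2 ≤ ∫ s in Set.Ioo (0:ℝ) 1, G s ^ 2 := by
  have hG1 : IntegrableOn G (Set.Ioo 0 1) := hG.integrable one_le_two
  obtain ⟨hc, ho⟩ := rsol_ode hlam hG1
  have hc2 : IntegrableOn (fun s => rsol lam G s ^ 2) (Set.Ioo 0 1) :=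
    ((hc.pow 2).integrableOn_Icc).mono_set Set.Ioo_subset_Icc_self
  have hcc : IntegrableOn (fun s => rsol lam G s) (Set.Ioo 0 1) :=
    (hc.integrableOn_Icc).mono_set Set.Ioo_subset_Icc_self
  have hu : MemLp (rsol lam G) 2 (volume.restrict (Set.Ioo (0:ℝ) 1)) :=
    (memLp_two_iff_integrable_sq hcc.aestronglyMeasurable).2 hc2
  refine ⟨hc2, ?_⟩
  have hE := energy_one (u := rsol lam G) (g := fun τ => G τ - lam * rsol lam G τ)
    (hG1.sub (hcc.const_mul lam)) ho (by simpa using rsol_per lam G 0)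
  have hGu : Integrable (fun s => rsol lam G s * G s) (volume.restrict (Set.Ioo (0:ℝ) 1)) :=
    hu.integrable_mul hG
  have h1 : ∫ s in Set.Ioo (0:ℝ) 1, (G s ^ 2 - lam ^ 2 * rsol lam G s ^ 2
      - 2 * lam * (rsol lam G s * (G s - lam * rsol lam G s))) ≥ 0 := by
    apply integral_nonneg
    intro s
    have : (0:ℝ) ≤ (G s - lam * rsol lam G s) ^ 2 := sq_nonneg _
    simp only [Pi.zero_apply]
    nlinarith
  have hX : Integrable (fun s => rsol lam G s * (G s - lam * rsol lam G s))
      (volume.restrict (Set.Ioo (0:ℝ) 1)) := by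
    have := hGu.sub (hc2.const_mul lam)
    refine this.congr (Filter.Eventually.of_forall fun s => ?_)
    simp only [Pi.sub_apply]; ring
  rw [integral_sub, integral_sub, integral_const_mul, integral_const_mul, hE] at h1
  · linarith
  · exact hG.integrable_sq
  · exact hc2.const_mul _
  · exact hG.integrable_sq.sub (hc2.const_mul _)
  · exact hX.const_mul _

end

section


/-- the jump measure -/
def aM {d : ℕ} (a : (Fin d → ℝ) → ℝ) : Measure (Fin d → ℝ) :=
  volume.withDensity (fun z => ENNReal.ofReal (a z))

lemma aM_prob {d : ℕ} {a : (Fin d → ℝ) → ℝ} (hanonneg : ∀ z, 0 ≤ a z)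
    (haint : Integrable a) (hamass : ∫ z, a z = 1) : IsProbabilityMeasure (aM a) := by
  constructor
  rw [aM, withDensity_apply _ MeasurableSet.univ, Measure.restrict_univ,
    ← ofReal_integral_eq_lintegral_ofReal haint (Filter.Eventually.of_forall hanonneg), hamass]
  simp

lemma aM_neg {d : ℕ} {a : (Fin d → ℝ) → ℝ} (hameas : Measurable a)
    (hasymm : ∀ z, a (-z) = a z) : MeasurePreserving (fun z => -z) (aM a) (aM a) := by
  refine ⟨measurable_neg, ?_⟩
  ext B hB
  rw [Measure.map_apply measurable_neg hB, aM, withDensity_apply _ hB,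
    withDensity_apply _ (measurable_neg hB)]
  rw [← lintegral_indicator hB, ← lintegral_indicator (measurable_neg hB)]
  rw [← (Measure.measurePreserving_neg (volume : Measure (Fin d → ℝ))).lintegral_comp
    ((hameas.ennreal_ofReal).indicator hB)]
  congr 1
  ext z
  by_cases h : -z ∈ B
  · rw [Set.indicator_of_mem h, Set.indicator_of_mem (show z ∈ Neg.neg ⁻¹' B from h), hasymm]
  · rw [Set.indicator_of_notMem h, Set.indicator_of_notMem (show z ∉ Neg.neg ⁻¹' B from h)]

lemma integral_aM {d : ℕ} {a : (Fin d → ℝ) → ℝ} (hameas : Measurable a)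
    (hanonneg : ∀ z, 0 ≤ a z) (f : (Fin d → ℝ) → ℝ) :
    ∫ z, f z ∂(aM a) = ∫ z, a z * f z := by
  rw [aM, integral_withDensity_eq_integral_toReal_smul hameas.ennreal_ofReal
    (Filter.Eventually.of_forall fun z => ENNReal.ofReal_lt_top)]
  congr 1; ext z
  rw [ENNReal.toReal_ofReal (hanonneg z), smul_eq_mul]

lemma Aop_eq {d : ℕ} {a : (Fin d → ℝ) → ℝ} (hameas : Measurable a)
    (hanonneg : ∀ z, 0 ≤ a z) (hasymm : ∀ z, a (-z) = a z)
    (μ : (Fin d → ℝ) → (Fin d → ℝ) → ℝ → ℝ) (s : ℝ) (v : (Fin d → ℝ) → ℝ) (ξ : Fin d → ℝ) :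
    Aop a μ s v ξ = ∫ z, μ ξ (ξ + z) s * (v (ξ + z) - v ξ) ∂(aM a) := by
  rw [integral_aM hameas hanonneg, Aop, ← integral_add_left_eq_self _ ξ]
  congr 1; ext z
  rw [show ξ - (ξ + z) = -z by abel, hasymm]; ring

lemma two_sq (x y : ENNReal) : (x + y) ^ 2 ≤ 2 * x ^ 2 + 2 * y ^ 2 := by
  have := ENNReal.rpow_add_le_mul_rpow_add_rpow x y (p := 2) (by norm_num)
  norm_num at this
  rw [mul_add] at this
  exact this

open scoped Pointwise in
lemma gap_lemma {d : ℕ} {a : (Fin d → ℝ) → ℝ} (hameas : Measurable a)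
    (hanonneg : ∀ z, 0 ≤ a z) (hamass : ∫ z, a z = 1) :
    ∃ C : ENNReal, C ≠ ⊤ ∧ ∀ D : (Fin d → ℝ) → ENNReal, Measurable D →
      (∀ x y, D (x + y) ≤ D x + D y) → (∀ x, D (-x) = D x) →
      ∫⁻ z, D z ^ 2 ∂(kap d) ≤ C * ∫⁻ z, D z ^ 2 ∂(aM a) := by
  -- level set
  obtain ⟨n, hn⟩ : ∃ n : ℕ, volume {z | 1 / ((n : ℝ) + 1) ≤ a z} ≠ 0 := by
    by_contra! h
    have h0 : volume (⋃ n : ℕ, {z | 1 / ((n : ℝ) + 1) ≤ a z}) = 0 := measure_iUnion_null h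
    have : a =ᵐ[volume] 0 := by
      rw [Filter.EventuallyEq, ae_iff]
      refine measure_mono_null ?_ h0
      intro z hz
      have hz' : 0 < a z := lt_of_le_of_ne (hanonneg z) (Ne.symm hz)
      obtain ⟨m, hm⟩ := exists_nat_one_div_lt hz'
      exact Set.mem_iUnion.2 ⟨m, hm.le⟩
    rw [integral_congr_ae this] at hamass
    simp at hamass
  set δ : ℝ := 1 / ((n : ℝ) + 1) with hδ
  have hδ0 : 0 < δ := by positivity
  have hSm : MeasurableSet {z | δ ≤ a z} := measurableSet_le measurable_const hameas
  obtain ⟨K, hKS, hKc, hK0⟩ := hSm.exists_lt_isCompact (μ := volume) (r := 0) (pos_iff_ne_zero.2 hn)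
  have hKtop : volume K ≠ ⊤ := hKc.measure_lt_top.ne
  have hKm : MeasurableSet K := hKc.measurableSet
  have hhalf : 0 < volume K / 2 := ENNReal.half_pos hK0.ne'
  have hev : ∀ᶠ x in nhds (0 : Fin d → ℝ), volume ((x +ᵥ K) \ K) < volume K / 2 :=
    (tendsto_measure_vadd_sdiff_isCompact_isClosed (μ := volume) hKc hKc.isClosed).eventually
      (gt_mem_nhds hhalf)
  obtain ⟨r, hr, hball⟩ := Metric.eventually_nhds_iff.1 hev
  obtain ⟨m, hm⟩ := exists_nat_one_div_lt hr
  set c : ENNReal := volume K / 2 with hc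
  have hctop : c ≠ ⊤ := ENNReal.div_ne_top hKtop (by norm_num)
  have hcc : c + c = volume K := ENNReal.add_halves _
  refine ⟨((m : ENNReal) + 1) ^ 2 * (c⁻¹ * (4 * (ENNReal.ofReal δ)⁻¹)), ?_, ?_⟩
  · refine ENNReal.mul_ne_top (by finiteness) (ENNReal.mul_ne_top ?_ (ENNReal.mul_ne_top (by norm_num) ?_))
    · exact ENNReal.inv_ne_top.2 hhalf.ne'
    · exact ENNReal.inv_ne_top.2 (by simpa using hδ0)
  intro D hD hsub hneg
  set E := ∫⁻ z, D z ^ 2 ∂(aM a) with hE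
  have hKE : ∫⁻ z in K, D z ^ 2 ≤ (ENNReal.ofReal δ)⁻¹ * E := by
    have h1 : ENNReal.ofReal δ * ∫⁻ z in K, D z ^ 2 ≤ E := by
      rw [hE, aM, lintegral_withDensity_eq_lintegral_mul _ hameas.ennreal_ofReal (hD.pow_const 2),
        ← lintegral_const_mul _ (hD.pow_const 2)]
      refine le_trans ?_ (setLIntegral_le_lintegral K _)
      refine setLIntegral_mono (hameas.ennreal_ofReal.mul (hD.pow_const 2)) ?_
      intro z hz
      exact mul_le_mul' (ENNReal.ofReal_le_ofReal (hKS hz)) le_rfl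
    rw [mul_comm, ← div_eq_mul_inv]
    rw [ENNReal.le_div_iff_mul_le (Or.inl (by simpa using hδ0)) (Or.inl ENNReal.ofReal_ne_top), mul_comm]
    exact h1
  have hsmall : ∀ x : Fin d → ℝ, ‖x‖ < r → D x ^ 2 ≤ c⁻¹ * (4 * (ENNReal.ofReal δ)⁻¹) * E := by
    intro x hx
    have hx1 := hball (y := x) (by simpa using hx)
    have hxm : MeasurableSet (x +ᵥ K) := hKm.const_vadd x
    have hvol : c ≤ volume ((x +ᵥ K) ∩ K) := by
      have e1 : volume K ≤ volume ((x +ᵥ K) ∩ K) + c := by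
        calc volume K = volume (x +ᵥ K) := (measure_vadd _ _ _).symm
          _ = volume ((x +ᵥ K) ∩ K) + volume ((x +ᵥ K) \ K) := (measure_inter_add_sdiff _ hKm).symm
          _ ≤ _ := by gcongr
      rw [← hcc] at e1
      exact (ENNReal.add_le_add_iff_right hctop).1 e1
    have hIntg : D x ^ 2 * c ≤ 4 * ∫⁻ z in K, D z ^ 2 := by
      calc D x ^ 2 * c ≤ D x ^ 2 * volume ((x +ᵥ K) ∩ K) := by gcongr
        _ = ∫⁻ z in (x +ᵥ K) ∩ K, D x ^ 2 := by rw [setLIntegral_const]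
        _ ≤ ∫⁻ z in (x +ᵥ K) ∩ K, (2 * D z ^ 2 + 2 * D (z - x) ^ 2) := by
            refine lintegral_mono fun z => ?_
            refine le_trans ?_ (two_sq _ _)
            gcongr
            calc D x = D (z + -(z - x)) := by congr 1; abel
              _ ≤ D z + D (-(z - x)) := hsub _ _
              _ = _ := by rw [hneg]
        _ = 2 * (∫⁻ z in (x +ᵥ K) ∩ K, D z ^ 2) + 2 * ∫⁻ z in (x +ᵥ K) ∩ K, D (z - x) ^ 2 := by
            rw [lintegral_add_left ((hD.pow_const 2).const_mul 2),
              lintegral_const_mul _ (hD.pow_const 2), lintegral_const_mul]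
            exact (hD.comp (measurable_id.sub_const x)).pow_const 2
        _ ≤ 2 * (∫⁻ z in K, D z ^ 2) + 2 * ∫⁻ z in (x +ᵥ K), D (z - x) ^ 2 := by
            gcongr
            · exact Set.inter_subset_right
            · exact Set.inter_subset_left
        _ = 2 * (∫⁻ z in K, D z ^ 2) + 2 * ∫⁻ z in K, D z ^ 2 := by
            congr 2
            rw [← lintegral_indicator hxm, ← lintegral_indicator hKm,
              ← lintegral_add_left_eq_self _ x]
            congr 1; ext z
            have hz : x + z ∈ x +ᵥ K ↔ z ∈ K := by
              rw [show x + z = x +ᵥ z from rfl, Set.vadd_mem_vadd_set_iff]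
            by_cases h : z ∈ K
            · rw [Set.indicator_of_mem h, Set.indicator_of_mem (hz.2 h)]; simp
            · rw [Set.indicator_of_notMem h, Set.indicator_of_notMem (fun h' => h (hz.1 h'))]
        _ = _ := by rw [← add_mul]; norm_num
    have h2 : D x ^ 2 ≤ (4 * ∫⁻ z in K, D z ^ 2) / c :=
      (ENNReal.le_div_iff_mul_le (Or.inl hhalf.ne') (Or.inl hctop)).2 hIntg
    calc D x ^ 2 ≤ (4 * ∫⁻ z in K, D z ^ 2) / c := h2
      _ ≤ (4 * ((ENNReal.ofReal δ)⁻¹ * E)) / c := by gcongr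
      _ = _ := by rw [div_eq_mul_inv]; ring
  have hmul : ∀ (k : ℕ) (x : Fin d → ℝ), D (((k : ℝ) + 1) • x) ≤ ((k : ENNReal) + 1) * D x := by
    intro k x
    induction k with
    | zero => simp
    | succ k ih =>
      have : ((k + 1 : ℕ) + 1 : ℝ) • x = ((k : ℝ) + 1) • x + x := by
        push_cast; rw [add_smul _ (1:ℝ) x, one_smul]
      rw [this]
      calc _ ≤ _ := hsub _ _
        _ ≤ ((k : ENNReal) + 1) * D x + D x := by gcongr
        _ = _ := by push_cast; ring
  have hall : ∀ x ∈ cube d, D x ^ 2 ≤ ((m : ENNReal) + 1) ^ 2 * (c⁻¹ * (4 * (ENNReal.ofReal δ)⁻¹)) * E := by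
    intro x hx
    have hxn : ‖x‖ ≤ 1 := by
      rw [pi_norm_le_iff_of_nonneg zero_le_one]
      intro i
      have := hx i (Set.mem_univ i)
      rw [Real.norm_eq_abs, abs_of_nonneg this.1]; exact this.2.le
    set y := (1 / ((m : ℝ) + 1)) • x with hy
    have hyn : ‖y‖ < r := by
      rw [hy, norm_smul, Real.norm_of_nonneg (by positivity)]
      calc _ ≤ 1 / ((m : ℝ) + 1) * 1 := by gcongr
        _ < r := by simpa using hm
    have hxy : x = ((m : ℝ) + 1) • y := by
      rw [hy, smul_smul, mul_one_div_cancel (by positivity), one_smul]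
    calc D x ^ 2 ≤ (((m : ENNReal) + 1) * D y) ^ 2 := by
          conv_lhs => rw [hxy]
          gcongr; exact hmul m y
      _ = ((m : ENNReal) + 1) ^ 2 * D y ^ 2 := by rw [mul_pow]
      _ ≤ ((m : ENNReal) + 1) ^ 2 * (c⁻¹ * (4 * (ENNReal.ofReal δ)⁻¹) * E) := by
          gcongr; exact hsmall y hyn
      _ = _ := by ring
  calc ∫⁻ z, D z ^ 2 ∂(kap d)
      ≤ ∫⁻ z, (((m : ENNReal) + 1) ^ 2 * (c⁻¹ * (4 * (ENNReal.ofReal δ)⁻¹)) * E) ∂(kap d) := by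
        unfold kap
        exact setLIntegral_mono measurable_const hall
    _ = _ := by simp

end

section


structure GoodF {d : ℕ} (f : (Fin d → ℝ) × ℝ → ℝ) : Prop where
  meas : Measurable f
  per : SPer f
  mem : MemLp f 2 (nuQ d)

/-- bundled hypotheses -/
structure Dat {d : ℕ} (a : (Fin d → ℝ) → ℝ) (μ : (Fin d → ℝ) → (Fin d → ℝ) → ℝ → ℝ)
    (μm μp : ℝ) : Prop where
  ameas : Measurable a
  anonneg : ∀ z, 0 ≤ a z
  aint : Integrable a
  amass : ∫ z, a z = 1
  asymm : ∀ z, a (-z) = a z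
  mmeas : Measurable fun p : (Fin d → ℝ) × (Fin d → ℝ) × ℝ => μ p.1 p.2.1 p.2.2
  per₁ : ∀ ξ η s, ∀ k : Fin d → ℤ, μ (ξ + fun i => (k i : ℝ)) η s = μ ξ η s
  per₂ : ∀ ξ η s, ∀ k : Fin d → ℤ, μ ξ (η + fun i => (k i : ℝ)) s = μ ξ η s
  msymm : ∀ ξ η s, μ ξ η s = μ η ξ s
  mpos : 0 < μm
  lb : ∀ ξ η s, μm ≤ μ ξ η s
  ub : ∀ ξ η s, μ ξ η s ≤ μp

variable {d : ℕ}

lemma GoodF.sub {f g : (Fin d → ℝ) × ℝ → ℝ} (hf : GoodF f) (hg : GoodF g) :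
    GoodF (fun p => f p - g p) :=
  ⟨hf.meas.sub hg.meas, fun ξ s k => by simp only [hf.per ξ s k, hg.per ξ s k], hf.mem.sub hg.mem⟩

lemma GoodF.add {f g : (Fin d → ℝ) × ℝ → ℝ} (hf : GoodF f) (hg : GoodF g) :
    GoodF (fun p => f p + g p) :=
  ⟨hf.meas.add hg.meas, fun ξ s k => by simp only [hf.per ξ s k, hg.per ξ s k], hf.mem.add hg.mem⟩

lemma GoodF.const_mul {f : (Fin d → ℝ) × ℝ → ℝ} (hf : GoodF f) (c : ℝ) :
    GoodF (fun p => c * f p) :=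
  ⟨hf.meas.const_mul c, fun ξ s k => by simp only [hf.per ξ s k], hf.mem.const_mul c⟩

lemma GoodF.sh {f : (Fin d → ℝ) × ℝ → ℝ} (hf : GoodF f) (z : Fin d → ℝ) (p : (Fin d → ℝ) × ℝ) :
    f (p.1 + z, p.2) = f (shQ z p) := (hf.per.frc _ _).symm

/-- increments -/
def dfQ (f : (Fin d → ℝ) × ℝ → ℝ) (q : (Fin d → ℝ) × (Fin d → ℝ) × ℝ) : ℝ :=
  f (q.2.1 + q.1, q.2.2) - f q.2

def hQ (μ : (Fin d → ℝ) → (Fin d → ℝ) → ℝ → ℝ) (f : (Fin d → ℝ) × ℝ → ℝ)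
    (q : (Fin d → ℝ) × (Fin d → ℝ) × ℝ) : ℝ :=
  μ q.2.1 (q.2.1 + q.1) q.2.2 * dfQ f q

def AQ (a : (Fin d → ℝ) → ℝ) (μ : (Fin d → ℝ) → (Fin d → ℝ) → ℝ → ℝ)
    (f : (Fin d → ℝ) × ℝ → ℝ) (p : (Fin d → ℝ) × ℝ) : ℝ :=
  Aop a μ p.2 (fun η => f (η, p.2)) p.1

def PQ (f : (Fin d → ℝ) × ℝ → ℝ) (p : (Fin d → ℝ) × ℝ) : ℝ := ∫ η, f (η, p.2) ∂(kap d)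

lemma GoodF.mem_sh {f : (Fin d → ℝ) × ℝ → ℝ} (hf : GoodF f) (α : Measure (Fin d → ℝ))
    [IsProbabilityMeasure α] :
    MemLp (fun q : (Fin d → ℝ) × (Fin d → ℝ) × ℝ => f (q.2.1 + q.1, q.2.2)) 2 (α.prod (nuQ d)) := by
  have := hf.mem.comp_measurePreserving (shQ_prod_mp α)
  refine this.congr_norm ?_ (Filter.Eventually.of_forall fun q => ?_)
  · exact (hf.meas.comp ((measurable_snd.fst.add measurable_fst).prodMk
      measurable_snd.snd)).aestronglyMeasurable
  · simp only [Function.comp]; rw [hf.sh]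

lemma GoodF.int_sh {f : (Fin d → ℝ) × ℝ → ℝ} (hf : GoodF f) (α : Measure (Fin d → ℝ))
    [IsProbabilityMeasure α] :
    ∫ q : (Fin d → ℝ) × (Fin d → ℝ) × ℝ, f (q.2.1 + q.1, q.2.2) ^ 2 ∂(α.prod (nuQ d))
      = ∫ p, f p ^ 2 ∂(nuQ d) := by
  conv_rhs => rw [← (shQ_prod_mp α).map_eq]
  rw [integral_map (measurable_shQ.aemeasurable)]
  · simp_rw [← hf.sh]
  · exact (hf.meas.pow_const 2).aestronglyMeasurable

lemma GoodF.mem_snd {f : (Fin d → ℝ) × ℝ → ℝ} (hf : GoodF f) (α : Measure (Fin d → ℝ))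
    [IsProbabilityMeasure α] :
    MemLp (fun q : (Fin d → ℝ) × (Fin d → ℝ) × ℝ => f q.2) 2 (α.prod (nuQ d)) :=
  hf.mem.comp_measurePreserving measurePreserving_snd

lemma GoodF.int_snd {f : (Fin d → ℝ) × ℝ → ℝ} (hf : GoodF f) (α : Measure (Fin d → ℝ))
    [IsProbabilityMeasure α] :
    ∫ q : (Fin d → ℝ) × (Fin d → ℝ) × ℝ, f q.2 ^ 2 ∂(α.prod (nuQ d))
      = ∫ p, f p ^ 2 ∂(nuQ d) := by
  have h : MeasurePreserving (Prod.snd : (Fin d → ℝ) × (Fin d → ℝ) × ℝ → _)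
      (α.prod (nuQ d)) (nuQ d) := measurePreserving_snd
  conv_rhs => rw [← h.map_eq]
  rw [integral_map measurable_snd.aemeasurable]
  exact (hf.meas.pow_const 2).aestronglyMeasurable

lemma GoodF.df_meas {f : (Fin d → ℝ) × ℝ → ℝ} (hf : GoodF f) : Measurable (dfQ f) :=
  (hf.meas.comp ((measurable_snd.fst.add measurable_fst).prodMk measurable_snd.snd)).sub
    (hf.meas.comp measurable_snd)

lemma GoodF.df_mem {f : (Fin d → ℝ) × ℝ → ℝ} (hf : GoodF f) (α : Measure (Fin d → ℝ))
    [IsProbabilityMeasure α] : MemLp (dfQ f) 2 (α.prod (nuQ d)) :=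
  (hf.mem_sh α).sub (hf.mem_snd α)

lemma GoodF.df_sq {f : (Fin d → ℝ) × ℝ → ℝ} (hf : GoodF f) (α : Measure (Fin d → ℝ))
    [IsProbabilityMeasure α] :
    ∫ q, dfQ f q ^ 2 ∂(α.prod (nuQ d)) ≤ 4 * ∫ p, f p ^ 2 ∂(nuQ d) := by
  have h1 := (hf.mem_sh α).integrable_sq
  have h2 := (hf.mem_snd α).integrable_sq
  have : ∫ q, dfQ f q ^ 2 ∂(α.prod (nuQ d)) ≤
      ∫ q : (Fin d → ℝ) × (Fin d → ℝ) × ℝ,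
        (2 * f (q.2.1 + q.1, q.2.2) ^ 2 + 2 * f q.2 ^ 2) ∂(α.prod (nuQ d)) := by
    refine integral_mono (hf.df_mem α).integrable_sq ((h1.const_mul 2).add (h2.const_mul 2)) ?_
    intro q
    simp only [dfQ]
    nlinarith [sq_nonneg (f (q.2.1 + q.1, q.2.2) + f q.2)]
  rw [integral_add (h1.const_mul 2) (h2.const_mul 2), integral_const_mul, integral_const_mul,
    hf.int_sh, hf.int_snd] at this
  linarith

lemma ofReal_int_sq {Ω : Type*} [MeasurableSpace Ω] {m : Measure Ω} {f : Ω → ℝ}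
    (hf : MemLp f 2 m) : ENNReal.ofReal (∫ x, f x ^ 2 ∂m) = ∫⁻ x, ‖f x‖ₑ ^ 2 ∂m := by
  rw [ofReal_integral_eq_lintegral_ofReal hf.integrable_sq
    (Filter.Eventually.of_forall fun x => sq_nonneg _)]
  congr 1; ext x
  rw [← sq_abs, ENNReal.ofReal_pow (abs_nonneg _), ← Real.norm_eq_abs, ofReal_norm]

lemma eLpNorm_two_sq {Ω : Type*} [MeasurableSpace Ω] {m : Measure Ω} (f : Ω → ℝ) :
    eLpNorm f 2 m ^ 2 = ∫⁻ x, ‖f x‖ₑ ^ 2 ∂m := by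
  have := eLpNorm_nnreal_pow_eq_lintegral (p := 2) (f := f) (μ := m) (by norm_num)
  norm_num at this
  exact this

lemma sq_integral_le {Ω : Type*} [MeasurableSpace Ω] {m : Measure Ω} [IsProbabilityMeasure m]
    {f : Ω → ℝ} (hf : AEStronglyMeasurable f m) :
    ‖∫ x, f x ∂m‖ₑ ^ 2 ≤ ∫⁻ x, ‖f x‖ₑ ^ 2 ∂m := by
  rw [← eLpNorm_two_sq]
  gcongr
  calc ‖∫ x, f x ∂m‖ₑ ≤ ∫⁻ x, ‖f x‖ₑ ∂m := enorm_integral_le_lintegral_enorm _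
    _ = eLpNorm f 1 m := (eLpNorm_one_eq_lintegral_enorm).symm
    _ ≤ eLpNorm f 2 m := eLpNorm_le_eLpNorm_of_exponent_le one_le_two hf

lemma avg_lemma {α : Measure (Fin d → ℝ)} [IsProbabilityMeasure α]
    {H : (Fin d → ℝ) × (Fin d → ℝ) × ℝ → ℝ} (hm : Measurable H)
    (hH : MemLp H 2 (α.prod (nuQ d))) :
    Measurable (fun p => ∫ z, H (z, p) ∂α) ∧ MemLp (fun p => ∫ z, H (z, p) ∂α) 2 (nuQ d) ∧
    ∫ p, (∫ z, H (z, p) ∂α) ^ 2 ∂(nuQ d) ≤ ∫ q, H q ^ 2 ∂(α.prod (nuQ d)) := by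
  have hmeas : Measurable (fun p => ∫ z, H (z, p) ∂α) :=
    (hm.stronglyMeasurable.integral_prod_left' (μ := α)).measurable
  have hle : ∫⁻ p, ‖∫ z, H (z, p) ∂α‖ₑ ^ 2 ∂(nuQ d) ≤ ∫⁻ q, ‖H q‖ₑ ^ 2 ∂(α.prod (nuQ d)) := by
    rw [lintegral_prod_symm _ (by fun_prop)]
    refine lintegral_mono fun p => ?_
    exact sq_integral_le (hm.comp (measurable_id.prodMk measurable_const)).aestronglyMeasurable
  have hmem : MemLp (fun p => ∫ z, H (z, p) ∂α) 2 (nuQ d) := by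
    refine ⟨hmeas.aestronglyMeasurable, ?_⟩
    have h1 : eLpNorm (fun p => ∫ z, H (z, p) ∂α) 2 (nuQ d) ^ 2 ≤ eLpNorm H 2 (α.prod (nuQ d)) ^ 2 := by
      rw [eLpNorm_two_sq, eLpNorm_two_sq]; exact hle
    have h2 : eLpNorm (fun p => ∫ z, H (z, p) ∂α) 2 (nuQ d) ≤ eLpNorm H 2 (α.prod (nuQ d)) :=
      le_of_not_gt fun h => not_le.2 (ENNReal.pow_lt_pow_left two_ne_zero h) h1
    exact h2.trans_lt hH.2
  refine ⟨hmeas, hmem, ?_⟩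
  rw [← ofReal_int_sq hmem, ← ofReal_int_sq hH] at hle
  exact (ENNReal.ofReal_le_ofReal_iff (integral_nonneg fun _ => sq_nonneg _)).1 hle

/-! ### The averaging operator -/

lemma PQ_eq {f : (Fin d → ℝ) × ℝ → ℝ} (hf : GoodF f) (p : (Fin d → ℝ) × ℝ) :
    PQ f p = ∫ z, f (p.1 + z, p.2) ∂(kap d) := by
  have h := frc_shift_mp p.1
  rw [PQ]
  conv_lhs => rw [← h.map_eq]
  rw [integral_map h.measurable.aemeasurable]
  · congr 1; ext z
    rw [hf.per.frc, add_comm]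
  · exact (hf.meas.comp (measurable_id.prodMk measurable_const)).aestronglyMeasurable

lemma sh_meas {f : (Fin d → ℝ) × ℝ → ℝ} (hf : GoodF f) :
    Measurable (fun q : (Fin d → ℝ) × (Fin d → ℝ) × ℝ => f (q.2.1 + q.1, q.2.2)) :=
  hf.meas.comp ((measurable_snd.fst.add measurable_fst).prodMk measurable_snd.snd)

lemma PQ_good {f : (Fin d → ℝ) × ℝ → ℝ} (hf : GoodF f) : GoodF (PQ f) := by
  obtain ⟨h1, h2, -⟩ := avg_lemma (sh_meas hf) (hf.mem_sh (kap d))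
  have : PQ f = fun p => ∫ z, f (p.1 + z, p.2) ∂(kap d) := funext (PQ_eq hf)
  refine ⟨?_, fun ξ s k => rfl, ?_⟩
  · rw [this]; exact h1
  · rw [this]; exact h2

lemma PQ_sq {f : (Fin d → ℝ) × ℝ → ℝ} (hf : GoodF f) :
    ∫ p, PQ f p ^ 2 ∂(nuQ d) ≤ ∫ p, f p ^ 2 ∂(nuQ d) := by
  obtain ⟨-, -, h3⟩ := avg_lemma (sh_meas hf) (hf.mem_sh (kap d))
  have : PQ f = fun p => ∫ z, f (p.1 + z, p.2) ∂(kap d) := funext (PQ_eq hf)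
  rw [this, ← hf.int_sh (kap d)]; exact h3

lemma df_kap {f : (Fin d → ℝ) × ℝ → ℝ} (hf : GoodF f) :
    ∫ q, dfQ f q ^ 2 ∂((kap d).prod (nuQ d)) =
      2 * (∫ p, f p ^ 2 ∂(nuQ d) - ∫ p, PQ f p * f p ∂(nuQ d)) := by
  have h1 := (hf.mem_sh (kap d)).integrable_sq
  have h2 := (hf.mem_snd (kap d)).integrable_sq
  have h3 : Integrable (fun q : (Fin d → ℝ) × (Fin d → ℝ) × ℝ => f (q.2.1 + q.1, q.2.2) * f q.2)
      ((kap d).prod (nuQ d)) := (hf.mem_sh (kap d)).integrable_mul (hf.mem_snd (kap d))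
  have e : ∀ q : (Fin d → ℝ) × (Fin d → ℝ) × ℝ, dfQ f q ^ 2 =
      f (q.2.1 + q.1, q.2.2) ^ 2 + f q.2 ^ 2 - 2 * (f (q.2.1 + q.1, q.2.2) * f q.2) := by
    intro q; simp only [dfQ]; ring
  simp_rw [e]
  rw [integral_sub (h1.fun_add h2) (h3.const_mul 2), integral_add h1 h2, integral_const_mul,
    hf.int_sh, hf.int_snd, integral_prod_symm _ h3]
  simp_rw [PQ_eq hf, ← integral_mul_const]
  ring

/-! ### The jump operator -/

section
variable {a : (Fin d → ℝ) → ℝ} {μ : (Fin d → ℝ) → (Fin d → ℝ) → ℝ → ℝ} {μm μp : ℝ}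

lemma Dat.prob (H : Dat a μ μm μp) : IsProbabilityMeasure (aM a) := aM_prob H.anonneg H.aint H.amass

lemma AQ_eq (H : Dat a μ μm μp) (f : (Fin d → ℝ) × ℝ → ℝ) (p : (Fin d → ℝ) × ℝ) :
    AQ a μ f p = ∫ z, hQ μ f (z, p) ∂(aM a) := by
  rw [AQ, Aop_eq H.ameas H.anonneg H.asymm]; rfl

lemma Dat.mu_meas (H : Dat a μ μm μp) :
    Measurable (fun q : (Fin d → ℝ) × (Fin d → ℝ) × ℝ => μ q.2.1 (q.2.1 + q.1) q.2.2) :=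
  H.mmeas.comp (measurable_snd.fst.prodMk ((measurable_snd.fst.add measurable_fst).prodMk
    measurable_snd.snd))

lemma Dat.abs_mu (H : Dat a μ μm μp) (ξ η : Fin d → ℝ) (s : ℝ) : |μ ξ η s| ≤ μp := by
  rw [abs_of_nonneg (H.mpos.le.trans (H.lb _ _ _))]; exact H.ub _ _ _

lemma Dat.mup (H : Dat a μ μm μp) : 0 < μp := H.mpos.trans_le ((H.lb 0 0 0).trans (H.ub 0 0 0))

lemma hQ_meas (H : Dat a μ μm μp) {f : (Fin d → ℝ) × ℝ → ℝ} (hf : GoodF f) :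
    Measurable (hQ μ f) := H.mu_meas.mul hf.df_meas

lemma hQ_mem (H : Dat a μ μm μp) {f : (Fin d → ℝ) × ℝ → ℝ} (hf : GoodF f) :
    MemLp (hQ μ f) 2 ((aM a).prod (nuQ d)) := by
  have := H.prob
  refine (hf.df_mem (aM a)).of_le_mul (c := μp) (hQ_meas H hf).aestronglyMeasurable ?_
  refine Filter.Eventually.of_forall fun q => ?_
  rw [hQ, norm_mul]
  gcongr
  exact H.abs_mu _ _ _

lemma hQ_sq (H : Dat a μ μm μp) {f : (Fin d → ℝ) × ℝ → ℝ} (hf : GoodF f) :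
    ∫ q, hQ μ f q ^ 2 ∂((aM a).prod (nuQ d)) ≤ 4 * μp ^ 2 * ∫ p, f p ^ 2 ∂(nuQ d) := by
  have := H.prob
  calc ∫ q, hQ μ f q ^ 2 ∂((aM a).prod (nuQ d))
      ≤ ∫ q, μp ^ 2 * dfQ f q ^ 2 ∂((aM a).prod (nuQ d)) := by
        refine integral_mono (hQ_mem H hf).integrable_sq
          ((hf.df_mem _).integrable_sq.const_mul _) fun q => ?_
        simp only [hQ, mul_pow]
        gcongr ?_ * _
        rw [← sq_abs]
        have := H.abs_mu q.2.1 (q.2.1 + q.1) q.2.2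
        gcongr
    _ = μp ^ 2 * ∫ q, dfQ f q ^ 2 ∂((aM a).prod (nuQ d)) := integral_const_mul _ _
    _ ≤ μp ^ 2 * (4 * ∫ p, f p ^ 2 ∂(nuQ d)) := by gcongr; exact hf.df_sq _
    _ = _ := by ring

lemma AQ_good (H : Dat a μ μm μp) {f : (Fin d → ℝ) × ℝ → ℝ} (hf : GoodF f) :
    GoodF (AQ a μ f) := by
  have := H.prob
  obtain ⟨h1, h2, -⟩ := avg_lemma (hQ_meas H hf) (hQ_mem H hf)
  have e : AQ a μ f = fun p => ∫ z, hQ μ f (z, p) ∂(aM a) := funext (AQ_eq H f)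
  refine ⟨by rw [e]; exact h1, ?_, by rw [e]; exact h2⟩
  intro ξ s k
  rw [AQ_eq H, AQ_eq H]
  refine integral_congr_ae (Filter.Eventually.of_forall fun z => ?_)
  simp only [hQ, dfQ]
  rw [add_right_comm, H.per₁, H.per₂, hf.per, hf.per]

lemma AQ_sq (H : Dat a μ μm μp) {f : (Fin d → ℝ) × ℝ → ℝ} (hf : GoodF f) :
    ∫ p, AQ a μ f p ^ 2 ∂(nuQ d) ≤ 4 * μp ^ 2 * ∫ p, f p ^ 2 ∂(nuQ d) := by
  have := H.prob
  obtain ⟨-, -, h3⟩ := avg_lemma (hQ_meas H hf) (hQ_mem H hf)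
  have e : AQ a μ f = fun p => ∫ z, hQ μ f (z, p) ∂(aM a) := funext (AQ_eq H f)
  rw [e]
  exact h3.trans (hQ_sq H hf)

lemma hQ_flip (H : Dat a μ μm μp) {f : (Fin d → ℝ) × ℝ → ℝ} (hf : GoodF f)
    (q : (Fin d → ℝ) × (Fin d → ℝ) × ℝ) : hQ μ f (-q.1, shQ q.1 q.2) = - hQ μ f q := by
  simp only [hQ, dfQ, shQ]
  rw [frc_eq, add_right_comm _ _ (-q.1), H.per₁, H.per₂, hf.per, hf.per, add_neg_cancel_right,
    H.msymm]
  ring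

lemma AQ_mean (H : Dat a μ μm μp) {f : (Fin d → ℝ) × ℝ → ℝ} (hf : GoodF f) :
    ∫ p, AQ a μ f p ∂(nuQ d) = 0 := by
  have := H.prob
  have hi : Integrable (hQ μ f) ((aM a).prod (nuQ d)) := (hQ_mem H hf).integrable one_le_two
  simp_rw [AQ_eq H f]
  rw [← integral_prod_symm _ hi]
  have hmp := shQ_flip_mp (aM a) (aM_neg H.ameas H.asymm)
  have : ∫ q, hQ μ f q ∂((aM a).prod (nuQ d)) = - ∫ q, hQ μ f q ∂((aM a).prod (nuQ d)) := by
    conv_lhs => rw [← hmp.map_eq]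
    rw [integral_map hmp.measurable.aemeasurable (hQ_meas H hf).aestronglyMeasurable,
      ← integral_neg]
    simp_rw [hQ_flip H hf]
  linarith

lemma AQ_energy (H : Dat a μ μm μp) {f : (Fin d → ℝ) × ℝ → ℝ} (hf : GoodF f) :
    ∫ p, AQ a μ f p * f p ∂(nuQ d) ≤ - (μm / 2) * ∫ q, dfQ f q ^ 2 ∂((aM a).prod (nuQ d)) := by
  have := H.prob
  have hi : Integrable (fun q => hQ μ f q * f q.2) ((aM a).prod (nuQ d)) :=
    (hQ_mem H hf).integrable_mul (hf.mem_snd _)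
  have hi2 : Integrable (fun q => hQ μ f q * f (q.2.1 + q.1, q.2.2)) ((aM a).prod (nuQ d)) :=
    (hQ_mem H hf).integrable_mul (hf.mem_sh _)
  have e1 : ∫ p, AQ a μ f p * f p ∂(nuQ d) = ∫ q, hQ μ f q * f q.2 ∂((aM a).prod (nuQ d)) := by
    rw [integral_prod_symm _ hi]
    simp_rw [AQ_eq H f, integral_mul_const]
  have hmp := shQ_flip_mp (aM a) (aM_neg H.ameas H.asymm)
  have e2 : ∫ q, hQ μ f q * f q.2 ∂((aM a).prod (nuQ d)) =
      - ∫ q, hQ μ f q * f (q.2.1 + q.1, q.2.2) ∂((aM a).prod (nuQ d)) := by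
    conv_lhs => rw [← hmp.map_eq]
    rw [integral_map hmp.measurable.aemeasurable
      (show Measurable (fun q : (Fin d → ℝ) × (Fin d → ℝ) × ℝ => hQ μ f q * f q.2) from
        (hQ_meas H hf).mul (hf.meas.comp measurable_snd)).aestronglyMeasurable,
      ← integral_neg]
    congr 1; ext q
    rw [hQ_flip H hf, ← hf.sh]; ring
  have e3 : μm * ∫ q, dfQ f q ^ 2 ∂((aM a).prod (nuQ d)) ≤
      ∫ q, (hQ μ f q * f (q.2.1 + q.1, q.2.2) - hQ μ f q * f q.2) ∂((aM a).prod (nuQ d)) := by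
    rw [← integral_const_mul]
    refine integral_mono ((hf.df_mem _).integrable_sq.const_mul _) (hi2.sub hi) fun q => ?_
    simp only [hQ]
    have h1 := H.lb q.2.1 (q.2.1 + q.1) q.2.2
    have h2 : μ q.2.1 (q.2.1 + q.1) q.2.2 * dfQ f q * f (q.2.1 + q.1, q.2.2) -
      μ q.2.1 (q.2.1 + q.1) q.2.2 * dfQ f q * f q.2 = μ q.2.1 (q.2.1 + q.1) q.2.2 * dfQ f q ^ 2 := by
      simp only [dfQ]; ring
    rw [h2]
    gcongr
  rw [integral_sub hi2 hi] at e3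
  rw [e1]
  linarith

lemma AQ_sub (H : Dat a μ μm μp) {f g : (Fin d → ℝ) × ℝ → ℝ} (hf : GoodF f) (hg : GoodF g) :
    ∀ᵐ p ∂(nuQ d), AQ a μ (fun p => f p - g p) p = AQ a μ f p - AQ a μ g p := by
  have := H.prob
  have i1 : Integrable (hQ μ f) ((aM a).prod (nuQ d)) := (hQ_mem H hf).integrable one_le_two
  have i2 : Integrable (hQ μ g) ((aM a).prod (nuQ d)) := (hQ_mem H hg).integrable one_le_two
  filter_upwards [i1.prod_left_ae, i2.prod_left_ae] with p h1 h2
  rw [AQ_eq H, AQ_eq H, AQ_eq H, ← integral_sub h1 h2]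
  congr 1; ext z
  simp only [hQ, dfQ]; ring

lemma sq_zero_ae {Ω : Type*} [MeasurableSpace Ω] {m : Measure Ω} {f : Ω → ℝ}
    (hf : MemLp f 2 m) (h : ∫ x, f x ^ 2 ∂m ≤ 0) : ∀ᵐ x ∂m, f x = 0 := by
  have h0 : ∫ x, f x ^ 2 ∂m = 0 := le_antisymm h (integral_nonneg fun _ => sq_nonneg _)
  rw [integral_eq_zero_iff_of_nonneg (fun _ => sq_nonneg _) hf.integrable_sq] at h0
  filter_upwards [h0] with x hx
  simpa using hx

lemma AQ_congr (H : Dat a μ μm μp) {f g : (Fin d → ℝ) × ℝ → ℝ} (hf : GoodF f) (hg : GoodF g)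
    (h : ∀ᵐ p ∂(nuQ d), f p = g p) : ∀ᵐ p ∂(nuQ d), AQ a μ f p = AQ a μ g p := by
  have h1 := AQ_sq H (hf.sub hg)
  have h2 : ∫ p, (f p - g p) ^ 2 ∂(nuQ d) = 0 := by
    rw [integral_congr_ae (g := fun _ => (0:ℝ)) (by filter_upwards [h] with p hp; simp [hp])]
    simp
  rw [h2, mul_zero] at h1
  filter_upwards [sq_zero_ae (AQ_good H (hf.sub hg)).mem h1, AQ_sub H hf hg] with p h3 h4
  rw [h3] at h4; linarith

lemma PQ_sub {f g : (Fin d → ℝ) × ℝ → ℝ} (hf : GoodF f) (hg : GoodF g) :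
    ∀ᵐ p ∂(nuQ d), PQ (fun p => f p - g p) p = PQ f p - PQ g p := by
  have i1 := ((hf.mem_sh (kap d)).integrable one_le_two).prod_left_ae
  have i2 := ((hg.mem_sh (kap d)).integrable one_le_two).prod_left_ae
  filter_upwards [i1, i2] with p h1 h2
  rw [PQ_eq hf, PQ_eq hg, PQ_eq (hf.sub hg), ← integral_sub h1 h2]

lemma PQ_congr {f g : (Fin d → ℝ) × ℝ → ℝ} (hf : GoodF f) (hg : GoodF g)
    (h : ∀ᵐ p ∂(nuQ d), f p = g p) : ∀ᵐ p ∂(nuQ d), PQ f p = PQ g p := by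
  have h1 := PQ_sq (hf.sub hg)
  have h2 : ∫ p, (f p - g p) ^ 2 ∂(nuQ d) = 0 := by
    rw [integral_congr_ae (g := fun _ => (0:ℝ)) (by filter_upwards [h] with p hp; simp [hp])]
    simp
  rw [h2] at h1
  filter_upwards [sq_zero_ae (PQ_good (hf.sub hg)).mem h1, PQ_sub hf hg] with p h3 h4
  rw [h3] at h4; linarith

lemma coercive (H : Dat a μ μm μp) : ∃ c : ℝ, 0 < c ∧ ∀ f : (Fin d → ℝ) × ℝ → ℝ, GoodF f →
    ∫ p, AQ a μ f p * f p ∂(nuQ d) ≤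
      - c * (∫ p, f p ^ 2 ∂(nuQ d) - ∫ p, PQ f p * f p ∂(nuQ d)) := by
  have := H.prob
  obtain ⟨C, hC, hgap⟩ := gap_lemma H.ameas H.anonneg H.amass
  have hm := H.mpos
  have hC0 : 0 ≤ C.toReal := ENNReal.toReal_nonneg
  refine ⟨μm / (C.toReal + 1), by positivity, fun f hf => ?_⟩
  set D : (Fin d → ℝ) → ENNReal := fun z => eLpNorm (fun p => f (shQ z p) - f p) 2 (nuQ d) with hD
  have hDsq : ∀ z, D z ^ 2 = ∫⁻ p, ‖dfQ f (z, p)‖ₑ ^ 2 ∂(nuQ d) := by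
    intro z
    rw [hD]; simp only [eLpNorm_two_sq, dfQ]
    simp_rw [← hf.sh]
  have hfm : Measurable fun q : (Fin d → ℝ) × (Fin d → ℝ) × ℝ => ‖dfQ f q‖ₑ ^ 2 :=
    hf.df_meas.enorm.pow_const 2
  have hDm : Measurable D := by
    have h2 : Measurable fun z => D z ^ 2 := by
      simp_rw [hDsq]; exact hfm.lintegral_prod_right'
    have : D = fun z => (D z ^ 2) ^ (1/2 : ℝ) := by
      ext z
      rw [← ENNReal.rpow_natCast, ← ENNReal.rpow_mul]; norm_num
    rw [this]
    exact h2.pow_const _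
  have hshm : ∀ z, Measurable (shQ (d := d) z) := fun z => (shQ_mp z).measurable
  have hsub : ∀ x y, D (x + y) ≤ D x + D y := by
    intro x y
    have e : (fun p => f (shQ (x + y) p) - f p) =
        (fun p => f (shQ x p) - f p) + (fun p => f (shQ y p) - f p) ∘ shQ x := by
      ext p
      simp only [Pi.add_apply, Function.comp]
      have : f (shQ y (shQ x p)) = f (shQ (x + y) p) := by
        rw [← hf.sh, ← hf.sh]
        simp only [shQ]
        rw [frc_eq, add_right_comm, hf.per, add_assoc]
      rw [this]; ring
    have m1 : AEStronglyMeasurable (fun p => f (shQ x p) - f p) (nuQ d) :=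
      ((hf.meas.comp (hshm x)).sub hf.meas).aestronglyMeasurable
    have m2 : Measurable (fun p => f (shQ y p) - f p) := (hf.meas.comp (hshm y)).sub hf.meas
    simp only [hD]
    rw [e]
    refine (eLpNorm_add_le m1 (m2.comp (hshm x)).aestronglyMeasurable one_le_two).trans ?_
    rw [eLpNorm_comp_measurePreserving m2.aestronglyMeasurable (shQ_mp x)]
  have hneg : ∀ x, D (-x) = D x := by
    intro x
    have e : (fun p => f (shQ x p) - f p) = - (fun p => f (shQ (-x) p) - f p) ∘ shQ x := by
      ext p
      simp only [Pi.neg_apply, Function.comp]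
      have : f (shQ (-x) (shQ x p)) = f p := by
        rw [← hf.sh]
        simp only [shQ]
        rw [frc_eq, add_right_comm, hf.per, add_neg_cancel_right]
      rw [this]; ring
    have m2 : Measurable (fun p => f (shQ (-x) p) - f p) := (hf.meas.comp (hshm (-x))).sub hf.meas
    simp only [hD]
    rw [e, eLpNorm_neg, eLpNorm_comp_measurePreserving m2.aestronglyMeasurable (shQ_mp x)]
  have key := hgap D hDm hsub hneg
  simp_rw [hDsq] at key
  rw [← lintegral_prod _ hfm.aemeasurable, ← lintegral_prod _ hfm.aemeasurable,
    ← ofReal_int_sq (hf.df_mem _), ← ofReal_int_sq (hf.df_mem _), df_kap hf,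
    ← ENNReal.ofReal_toReal hC, ← ENNReal.ofReal_mul hC0] at key
  have hE0 : 0 ≤ ∫ q, dfQ f q ^ 2 ∂((aM a).prod (nuQ d)) := integral_nonneg fun _ => sq_nonneg _
  have key2 := (ENNReal.ofReal_le_ofReal_iff (mul_nonneg hC0 hE0)).1 key
  have hen := AQ_energy H hf
  refine hen.trans ?_
  set X := ∫ p, f p ^ 2 ∂(nuQ d) - ∫ p, PQ f p * f p ∂(nuQ d)
  set E := ∫ q, dfQ f q ^ 2 ∂((aM a).prod (nuQ d))
  have : μm / (C.toReal + 1) * X ≤ μm / 2 * E := by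
    rw [div_mul_eq_mul_div, div_le_iff₀ (by positivity)]
    nlinarith
  linarith

lemma BQ_bound (H : Dat a μ μm μp) {c : ℝ} (hc : 0 < c)
    (hco : ∀ f : (Fin d → ℝ) × ℝ → ℝ, GoodF f →
    ∫ p, AQ a μ f p * f p ∂(nuQ d) ≤
      - c * (∫ p, f p ^ 2 ∂(nuQ d) - ∫ p, PQ f p * f p ∂(nuQ d))) {lam : ℝ} (hlam : 0 < lam)
    {f : (Fin d → ℝ) × ℝ → ℝ} (hf : GoodF f) :
    ∫ p, (AQ a μ f p - c * PQ f p + lam * f p) ^ 2 ∂(nuQ d) ≤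
      (lam ^ 2 - 2 * lam * c + (8 * μp ^ 2 + 2 * c ^ 2)) * ∫ p, f p ^ 2 ∂(nuQ d) := by
  have hA := (AQ_good H hf).mem
  have hP := (PQ_good hf).mem
  have iA := hA.integrable_sq
  have iP := hP.integrable_sq
  have iF := hf.mem.integrable_sq
  have iAF : Integrable (fun p => AQ a μ f p * f p) (nuQ d) := hA.integrable_mul hf.mem
  have iPF : Integrable (fun p => PQ f p * f p) (nuQ d) := hP.integrable_mul hf.mem
  have hG := ((AQ_good H hf).sub ((PQ_good hf).const_mul c)).add (hf.const_mul lam)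
  have h1 : ∫ p, (AQ a μ f p - c * PQ f p + lam * f p) ^ 2 ∂(nuQ d) ≤
      ∫ p, (((2 * AQ a μ f p ^ 2 + (2 * c ^ 2) * PQ f p ^ 2) + lam ^ 2 * f p ^ 2)
        + ((2 * lam) * (AQ a μ f p * f p) - (2 * lam * c) * (PQ f p * f p))) ∂(nuQ d) := by
    refine integral_mono hG.mem.integrable_sq ((((iA.const_mul _).add (iP.const_mul _)).add
      (iF.const_mul _)).add ((iAF.const_mul _).sub (iPF.const_mul _))) fun p => ?_
    simp only
    nlinarith [sq_nonneg (AQ a μ f p + c * PQ f p)]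
  rw [integral_add (((iA.const_mul _).fun_add (iP.const_mul _)).fun_add
      (iF.const_mul _)) (show Integrable (fun p => (2 * lam) * (AQ a μ f p * f p) - (2 * lam * c) * (PQ f p * f p))
        (nuQ d) from (iAF.const_mul _).sub (iPF.const_mul _)),
    integral_add ((iA.const_mul _).fun_add (iP.const_mul _)) (iF.const_mul _),
    integral_add (iA.const_mul _) (iP.const_mul _),
    integral_sub (iAF.const_mul _) (iPF.const_mul _)] at h1
  simp only [integral_const_mul] at h1
  have h2 := AQ_sq H hf
  have h3 := PQ_sq hf
  have h4 := mul_le_mul_of_nonneg_left (hco f hf) (by positivity : 0 ≤ 2 * lam)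
  have h5 := mul_le_mul_of_nonneg_left h3 (by positivity : 0 ≤ 2 * c ^ 2)
  linarith

end

end

section


variable {d : ℕ}

def RQ (lam : ℝ) (G : (Fin d → ℝ) × ℝ → ℝ) (p : (Fin d → ℝ) × ℝ) : ℝ :=
  rsol lam (fun τ => G (p.1, τ)) p.2

lemma RQ_meas (lam : ℝ) {G : (Fin d → ℝ) × ℝ → ℝ} (hG : Measurable G) :
    Measurable (RQ lam G) := by
  have h : Measurable (fun q : ((Fin d → ℝ) × ℝ) × ℝ =>
      rker lam (Int.fract q.1.2) q.2 * G (q.1.1, q.2)) := by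
    refine Measurable.mul ?_ (hG.comp (measurable_fst.fst.prodMk measurable_snd))
    unfold rker
    have hfr : Measurable (fun q : ((Fin d → ℝ) × ℝ) × ℝ => Int.fract q.1.2) :=
      measurable_fract.comp measurable_fst.snd
    refine Measurable.mul ?_ ?_
    · fun_prop
    · refine Measurable.add measurable_const (Measurable.ite ?_ measurable_const measurable_const)
      exact measurableSet_le measurable_snd hfr
  exact (h.stronglyMeasurable.integral_prod_right' (ν := volume.restrict (Set.Ioo (0:ℝ) 1))).measurable

lemma slice_mem {G : (Fin d → ℝ) × ℝ → ℝ} (hG : GoodF G) :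
    ∀ᵐ ξ ∂(kap d), MemLp (fun τ => G (ξ, τ)) 2 (volume.restrict (Set.Ioo (0:ℝ) 1)) := by
  have h := hG.mem.integrable_sq
  rw [nuQ] at h
  filter_upwards [h.prod_right_ae] with ξ hξ
  exact (memLp_two_iff_integrable_sq
    (hG.meas.comp (measurable_const.prodMk measurable_id)).aestronglyMeasurable).2 hξ

lemma RQ_good {lam : ℝ} (hlam : 0 < lam) {G : (Fin d → ℝ) × ℝ → ℝ} (hG : GoodF G) :
    GoodF (RQ lam G) ∧ lam ^ 2 * ∫ p, RQ lam G p ^ 2 ∂(nuQ d) ≤ ∫ p, G p ^ 2 ∂(nuQ d) := by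
  have hm := RQ_meas lam hG.meas
  have hle : ENNReal.ofReal (lam ^ 2) * ∫⁻ p, ‖RQ lam G p‖ₑ ^ 2 ∂(nuQ d) ≤
      ∫⁻ p, ‖G p‖ₑ ^ 2 ∂(nuQ d) := by
    have hGm := hG.meas
    have m1 : Measurable (fun p => ‖RQ lam G p‖ₑ ^ 2) := hm.enorm.pow_const 2
    have m2 : Measurable (fun p => ‖G p‖ₑ ^ 2) := hG.meas.enorm.pow_const 2
    rw [nuQ, lintegral_prod _ m1.aemeasurable, lintegral_prod _ m2.aemeasurable,
      ← lintegral_const_mul _ m1.lintegral_prod_right']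
    refine lintegral_mono_ae ?_
    filter_upwards [slice_mem hG] with ξ hξ
    obtain ⟨b1, b2⟩ := rsol_bound hlam hξ
    have mr : MemLp (fun s => RQ lam G (ξ, s)) 2 (volume.restrict (Set.Ioo (0:ℝ) 1)) :=
      (memLp_two_iff_integrable_sq
        (hm.comp (measurable_const.prodMk measurable_id)).aestronglyMeasurable).2 b1
    rw [← ofReal_int_sq mr, ← ofReal_int_sq hξ, ← ENNReal.ofReal_mul (by positivity)]
    exact ENNReal.ofReal_le_ofReal b2
  have hmem : MemLp (RQ lam G) 2 (nuQ d) := by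
    refine ⟨hm.aestronglyMeasurable, ?_⟩
    have h2 : eLpNorm (RQ lam G) 2 (nuQ d) ^ 2 < ⊤ := by
      rw [eLpNorm_two_sq]
      have h3 : ∫⁻ p, ‖G p‖ₑ ^ 2 ∂(nuQ d) < ⊤ := by
        rw [← ofReal_int_sq hG.mem]; exact ENNReal.ofReal_lt_top
      have h4 := hle.trans_lt h3
      rcases ENNReal.mul_lt_top_iff.1 h4 with h | h | h
      · exact h.2
      · have : 0 < ENNReal.ofReal (lam ^ 2) := ENNReal.ofReal_pos.2 (by positivity)
        exact absurd h this.ne'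
      · rw [h]; exact ENNReal.zero_lt_top
    exact lt_of_not_ge fun h => by
      rw [top_le_iff.1 h] at h2; simp at h2
  refine ⟨⟨hm, fun ξ s k => ?_, hmem⟩, ?_⟩
  · have : (fun τ => G (ξ + fun i => (k i : ℝ), τ)) = fun τ => G (ξ, τ) := by
      ext τ; exact hG.per ξ τ k
    simp only [RQ, this]
  · rw [← ofReal_int_sq hmem, ← ofReal_int_sq hG.mem, ← ENNReal.ofReal_mul (by positivity)] at hle
    exact (ENNReal.ofReal_le_ofReal_iff (integral_nonneg fun _ => sq_nonneg _)).1 hle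

lemma ae_slices {P : (Fin d → ℝ) × ℝ → Prop} (h : ∀ᵐ p ∂(nuQ d), P p) :
    ∀ᵐ ξ ∂(kap d), ∀ᵐ τ ∂(volume.restrict (Set.Ioo (0:ℝ) 1)), P (ξ, τ) := by
  rw [nuQ] at h
  exact Measure.ae_ae_of_ae_prod h

lemma rker_bdd (lam s : ℝ) (hs : s ∈ Set.Icc (0:ℝ) 1) (hlam : 0 < lam) (τ : ℝ) (hτ : τ ∈ Set.Ioo (0:ℝ) 1) :
    ‖rker lam s τ‖ ≤ Real.exp lam * (1 / (Real.exp lam - 1) + 1) := by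
  have h1 : 0 < Real.exp lam - 1 := by linarith [Real.add_one_lt_exp hlam.ne']
  have h2 : 0 ≤ 1 / (Real.exp lam - 1) + (if τ ≤ s then (1:ℝ) else 0) := by
    have : (0:ℝ) ≤ if τ ≤ s then 1 else 0 := by split_ifs <;> norm_num
    positivity
  rw [rker, norm_mul, Real.norm_of_nonneg (Real.exp_pos _).le, Real.norm_of_nonneg h2]
  refine mul_le_mul (Real.exp_le_exp.2 ?_) ?_ h2 (Real.exp_pos _).le
  · nlinarith [hs.1, hτ.2, hs.2]
  · gcongr; split_ifs <;> norm_num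

lemma rsol_sub {lam : ℝ} (hlam : 0 < lam) {G K : ℝ → ℝ} (hG : IntegrableOn G (Set.Ioo 0 1))
    (hK : IntegrableOn K (Set.Ioo 0 1)) (s : ℝ) :
    rsol lam (fun τ => G τ - K τ) s = rsol lam G s - rsol lam K s := by
  have hs : Int.fract s ∈ Set.Icc (0:ℝ) 1 := ⟨Int.fract_nonneg s, (Int.fract_lt_one s).le⟩
  have hm : Measurable (rker lam (Int.fract s)) := by
    unfold rker
    refine Measurable.mul (by fun_prop) ?_
    exact Measurable.add measurable_const (Measurable.ite measurableSet_Iic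
      measurable_const measurable_const)
  have hb : ∀ᵐ τ ∂(volume.restrict (Set.Ioo (0:ℝ) 1)), ‖rker lam (Int.fract s) τ‖ ≤
      Real.exp lam * (1 / (Real.exp lam - 1) + 1) := by
    filter_upwards [ae_restrict_mem measurableSet_Ioo] with τ hτ
    exact rker_bdd lam _ hs hlam τ hτ
  have i1 := hG.bdd_mul hm.aestronglyMeasurable hb
  have i2 := hK.bdd_mul hm.aestronglyMeasurable hb
  rw [rsol, rsol, rsol, ← integral_sub i1 i2]
  congr 1; ext τ; ring

lemma RQ_sub {lam : ℝ} (hlam : 0 < lam) {G K : (Fin d → ℝ) × ℝ → ℝ} (hG : GoodF G) (hK : GoodF K) :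
    ∀ᵐ p ∂(nuQ d), RQ lam (fun p => G p - K p) p = RQ lam G p - RQ lam K p := by
  have h1 : ∀ᵐ ξ ∂(kap d), ∀ᵐ τ ∂(volume.restrict (Set.Ioo (0:ℝ) 1)),
     RQ lam (fun p => G p - K p) (ξ, τ) = RQ lam G (ξ, τ) - RQ lam K (ξ, τ) := by
    filter_upwards [slice_mem hG, slice_mem hK] with ξ h1 h2
    exact Filter.Eventually.of_forall fun τ =>
      rsol_sub hlam (h1.integrable one_le_two) (h2.integrable one_le_two) τ
  have hms : MeasurableSet {p : (Fin d → ℝ) × ℝ |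
      RQ lam (fun p => G p - K p) p = RQ lam G p - RQ lam K p} :=
    measurableSet_eq_fun (RQ_meas lam (hG.sub hK).meas)
      ((RQ_meas lam hG.meas).sub (RQ_meas lam hK.meas))
  rw [nuQ]
  exact (Measure.ae_prod_iff_ae_ae hms).2 h1

/-- periodised representative -/
def rep (f : Lp ℝ 2 (nuQ d)) (p : (Fin d → ℝ) × ℝ) : ℝ := f (frc p.1, p.2)

lemma rep_ae (f : Lp ℝ 2 (nuQ d)) : rep f =ᵐ[nuQ d] f := by
  have h : ∀ᵐ p ∂(nuQ d), p ∈ cube d ×ˢ Set.Ioo (0:ℝ) 1 := by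
    rw [nuQ_eq]
    exact ae_restrict_mem ((measurableSet_cube d).prod measurableSet_Ioo)
  filter_upwards [h] with p hp
  simp only [rep]
  rw [frc_of_mem hp.1]

lemma rep_good (f : Lp ℝ 2 (nuQ d)) : GoodF (rep f) := by
  refine ⟨?_, ?_, (memLp_congr_ae (rep_ae f)).2 (Lp.memLp f)⟩
  · exact (Lp.stronglyMeasurable f).measurable.comp
      ((measurable_frc.comp measurable_fst).prodMk measurable_snd)
  · intro ξ s k
    simp only [rep]
    rw [frc_add_int]

lemma norm_sq_eq {f : (Fin d → ℝ) × ℝ → ℝ} (hf : MemLp f 2 (nuQ d)) :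
    ‖hf.toLp f‖ ^ 2 = ∫ p, f p ^ 2 ∂(nuQ d) := by
  rw [← real_inner_self_eq_norm_sq, L2.inner_def]
  refine integral_congr_ae ?_
  filter_upwards [hf.coeFn_toLp] with p hp
  rw [hp]; simp [sq]


section
variable {a : (Fin d → ℝ) → ℝ} {μ : (Fin d → ℝ) → (Fin d → ℝ) → ℝ → ℝ} {μm μp : ℝ}

def PsiQ (a : (Fin d → ℝ) → ℝ) (μ : (Fin d → ℝ) → (Fin d → ℝ) → ℝ → ℝ) (c lam : ℝ)
    (θ F : (Fin d → ℝ) × ℝ → ℝ) (p : (Fin d → ℝ) × ℝ) : ℝ :=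
  (AQ a μ F p - c * PQ F p + lam * F p) + θ p

lemma PsiQ_good (H : Dat a μ μm μp) (c lam : ℝ) {θ F : (Fin d → ℝ) × ℝ → ℝ} (hθ : GoodF θ)
    (hF : GoodF F) : GoodF (PsiQ a μ c lam θ F) :=
  (((AQ_good H hF).sub ((PQ_good hF).const_mul c)).add (hF.const_mul lam)).add hθ

lemma contr_est (H : Dat a μ μm μp) {c : ℝ} (hc : 0 < c)
    (hco : ∀ f : (Fin d → ℝ) × ℝ → ℝ, GoodF f →
    ∫ p, AQ a μ f p * f p ∂(nuQ d) ≤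
      - c * (∫ p, f p ^ 2 ∂(nuQ d) - ∫ p, PQ f p * f p ∂(nuQ d))) {lam : ℝ} (hlam : 0 < lam)
    {θ F G : (Fin d → ℝ) × ℝ → ℝ} (hθ : GoodF θ) (hF : GoodF F) (hG : GoodF G) :
    lam ^ 2 * ∫ p, (RQ lam (PsiQ a μ c lam θ F) p - RQ lam (PsiQ a μ c lam θ G) p) ^ 2 ∂(nuQ d) ≤
      (lam ^ 2 - 2 * lam * c + (8 * μp ^ 2 + 2 * c ^ 2)) * ∫ p, (F p - G p) ^ 2 ∂(nuQ d) := by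
  have gF := PsiQ_good H c lam hθ hF
  have gG := PsiQ_good H c lam hθ hG
  have h1 := (RQ_good hlam (gF.sub gG)).2
  have h2 := BQ_bound H hc hco hlam (hF.sub hG)
  have e1 : ∫ p, (RQ lam (PsiQ a μ c lam θ F) p - RQ lam (PsiQ a μ c lam θ G) p) ^ 2 ∂(nuQ d) =
      ∫ p, RQ lam (fun p => PsiQ a μ c lam θ F p - PsiQ a μ c lam θ G p) p ^ 2 ∂(nuQ d) := by
    refine integral_congr_ae ?_
    filter_upwards [RQ_sub hlam gF gG] with p hp
    rw [hp]
  have e2 : ∫ p, (PsiQ a μ c lam θ F p - PsiQ a μ c lam θ G p) ^ 2 ∂(nuQ d) =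
      ∫ p, (AQ a μ (fun p => F p - G p) p - c * PQ (fun p => F p - G p) p
        + lam * (F p - G p)) ^ 2 ∂(nuQ d) := by
    refine integral_congr_ae ?_
    filter_upwards [AQ_sub H hF hG, PQ_sub hF hG] with p h3 h4
    simp only [PsiQ, h3, h4]; ring
  rw [e1]
  rw [e2] at h1
  exact h1.trans h2

lemma fixed_pt (H : Dat a μ μm μp) {θ : (Fin d → ℝ) × ℝ → ℝ} (hθ : GoodF θ) :
    ∃ c lam : ℝ, 0 < c ∧ 0 < lam ∧ ∃ F, GoodF F ∧
      ∀ᵐ p ∂(nuQ d), RQ lam (PsiQ a μ c lam θ F) p = F p := by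
  obtain ⟨c, hc, hco⟩ := coercive H
  have hmp := H.mup
  set M := 8 * μp ^ 2 + 2 * c ^ 2 with hM
  have hM0 : 0 < M := by positivity
  have hlam : 0 < M / c := by positivity
  refine ⟨c, M / c, hc, hlam, ?_⟩
  set lam := M / c with hl
  have hlc : lam * c = M := by rw [hl]; field_simp
  have hr0 : 0 ≤ 1 - M / lam ^ 2 := by
    rw [sub_nonneg, div_le_one (by positivity), hl, div_pow, le_div_iff₀ (by positivity)]
    nlinarith [sq_nonneg c, sq_nonneg μp]
  have hr1 : 1 - M / lam ^ 2 < 1 := by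
    have : 0 < M / lam ^ 2 := by positivity
    linarith
  have hmem : ∀ f : Lp ℝ 2 (nuQ d), MemLp (RQ lam (PsiQ a μ c lam θ (rep f))) 2 (nuQ d) :=
    fun f => (RQ_good hlam (PsiQ_good H c lam hθ (rep_good f))).1.mem
  let T : Lp ℝ 2 (nuQ d) → Lp ℝ 2 (nuQ d) := fun f => (hmem f).toLp _
  set K : NNReal := Real.toNNReal (Real.sqrt (1 - M / lam ^ 2)) with hK
  have hKr : (K : ℝ) = Real.sqrt (1 - M / lam ^ 2) := Real.coe_toNNReal _ (Real.sqrt_nonneg _)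
  have hT : ContractingWith K T := by
    refine ⟨?_, LipschitzWith.of_dist_le_mul fun f g => ?_⟩
    · rw [← NNReal.coe_lt_coe, hKr, NNReal.coe_one, Real.sqrt_lt' one_pos]
      simpa using hr1
    · rw [dist_eq_norm, dist_eq_norm]
      refine le_of_sq_le_sq ?_ (by positivity)
      rw [mul_pow, hKr, Real.sq_sqrt hr0]
      have n1 : ‖T f - T g‖ ^ 2 = ∫ p, (RQ lam (PsiQ a μ c lam θ (rep f)) p -
          RQ lam (PsiQ a μ c lam θ (rep g)) p) ^ 2 ∂(nuQ d) := by
        simp only [T]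
        rw [← MemLp.toLp_sub, norm_sq_eq]
        rfl
      have n2 : ‖f - g‖ ^ 2 = ∫ p, (rep f p - rep g p) ^ 2 ∂(nuQ d) := by
        have := norm_sq_eq (Lp.memLp (f - g))
        rw [Lp.toLp_coeFn] at this
        rw [this]
        refine integral_congr_ae ?_
        filter_upwards [rep_ae f, rep_ae g, Lp.coeFn_sub f g] with p h1 h2 h3
        rw [h3, h1, h2]; rfl
      have := contr_est H hc hco hlam hθ (rep_good f) (rep_good g)
      rw [← hM, ← n1, ← n2] at this
      have hl2 : 0 < lam ^ 2 := by positivity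
      have e : (1 - M / lam ^ 2) * ‖f - g‖ ^ 2 = (lam ^ 2 - M) * ‖f - g‖ ^ 2 / lam ^ 2 := by
        field_simp
      rw [e, le_div_iff₀ hl2]
      nlinarith
  have hfix := hT.fixedPoint_isFixedPt
  set f := hT.fixedPoint T
  refine ⟨rep f, rep_good f, ?_⟩
  have h1 : T f =ᵐ[nuQ d] RQ lam (PsiQ a μ c lam θ (rep f)) := (hmem f).coeFn_toLp
  rw [hfix] at h1
  filter_upwards [h1, rep_ae f] with p h1 h2
  rw [h2, ← h1]

end


end

section


variable {d : ℕ}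

lemma ii_congr {f g : ℝ → ℝ} (h : ∀ᵐ τ ∂(volume.restrict (Set.Ioo (0:ℝ) 1)), f τ = g τ) {s : ℝ}
    (hs : s ∈ Set.Icc (0:ℝ) 1) : ∫ τ in (0:ℝ)..s, f τ = ∫ τ in (0:ℝ)..s, g τ := by
  rw [intervalIntegral.integral_of_le hs.1, intervalIntegral.integral_of_le hs.1]
  refine integral_congr_ae ?_
  rw [restrict_Ioo_eq_restrict_Ioc] at h
  exact ae_restrict_of_ae_restrict_of_subset (Set.Ioc_subset_Ioc_right hs.2) h

lemma ii_int {f : ℝ → ℝ} (h : IntegrableOn f (Set.Ioo (0:ℝ) 1)) {s : ℝ}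
    (hs : s ∈ Set.Icc (0:ℝ) 1) : IntervalIntegrable f volume 0 s := by
  rw [intervalIntegrable_iff_integrableOn_Ioc_of_le hs.1]
  rw [← integrableOn_Ioc_iff_integrableOn_Ioo] at h
  exact h.mono_set (Set.Ioc_subset_Ioc_right hs.2)

lemma slice_int {G : (Fin d → ℝ) × ℝ → ℝ} (hG : GoodF G) :
    ∀ᵐ ξ ∂(kap d), IntegrableOn (fun τ => G (ξ, τ)) (Set.Ioo (0:ℝ) 1) := by
  filter_upwards [slice_mem hG] with ξ h
  exact h.integrable one_le_two

lemma ii_one (f : ℝ → ℝ) : ∫ τ in (0:ℝ)..1, f τ = ∫ τ in Set.Ioo (0:ℝ) 1, f τ := by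
  rw [intervalIntegral.integral_of_le zero_le_one, integral_Ioc_eq_integral_Ioo]

lemma mean_zero {g : (Fin d → ℝ) × ℝ → ℝ} (hg : Integrable g (nuQ d))
    (h : ∀ᵐ ξ ∂(kap d), ∫ τ in Set.Ioo (0:ℝ) 1, g (ξ, τ) = 0) : ∫ p, g p ∂(nuQ d) = 0 := by
  rw [nuQ] at hg ⊢
  rw [integral_prod _ hg, integral_congr_ae h]
  simp

section
variable {a : (Fin d → ℝ) → ℝ} {μ : (Fin d → ℝ) → (Fin d → ℝ) → ℝ → ℝ} {μm μp : ℝ}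

lemma mild (H : Dat a μ μm μp) {θ : (Fin d → ℝ) × ℝ → ℝ} (hθ : GoodF θ) :
    ∃ c : ℝ, ∃ β, GoodF β ∧ (∀ ξ s, β (ξ, s + 1) = β (ξ, s)) ∧
      ∀ᵐ ξ ∂(kap d), ∀ s ∈ Set.Icc (0:ℝ) 1,
        β (ξ, s) = β (ξ, 0) + ∫ τ in (0:ℝ)..s, (AQ a μ β (ξ, τ) - c * PQ β (ξ, τ) + θ (ξ, τ)) := by
  obtain ⟨c, lam, hc, hlam, F, hF, hfix⟩ := fixed_pt H hθ
  have hΨ := PsiQ_good H c lam hθ hF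
  have hβ := (RQ_good hlam hΨ).1
  set β := RQ lam (PsiQ a μ c lam θ F) with hβd
  refine ⟨c, β, hβ, fun ξ s => rsol_per _ _ _, ?_⟩
  filter_upwards [slice_int hΨ, ae_slices hfix, ae_slices (AQ_congr H hβ hF hfix),
    ae_slices (PQ_congr hβ hF hfix)] with ξ h1 h2 h3 h4 s hs
  have := (rsol_ode hlam h1).2 s hs
  change β (ξ, s) = β (ξ, 0) + ∫ τ in (0:ℝ)..s, (PsiQ a μ c lam θ F (ξ, τ) - lam * β (ξ, τ)) at this
  rw [this]
  congr 1
  refine ii_congr ?_ hs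
  filter_upwards [h2, h3, h4] with τ h2 h3 h4
  rw [h2, h3, h4, PsiQ]; ring

lemma sol_good {θ β : (Fin d → ℝ) → ℝ → ℝ} (h : IsCellSol a μ θ β) :
    GoodF (fun p : (Fin d → ℝ) × ℝ => β p.1 p.2) := by
  obtain ⟨h1, h2, -, h4, -⟩ := h
  refine ⟨h1, fun ξ s k => h2 ξ s k, ?_⟩
  rw [memLp_two_iff_integrable_sq h1.aestronglyMeasurable, nuQ_eq]
  exact h4

lemma sol_eq {θ β : (Fin d → ℝ) → ℝ → ℝ} (h : IsCellSol a μ θ β) :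
    ∀ᵐ ξ ∂(kap d), ∀ s ∈ Set.Icc (0:ℝ) 1, β ξ s = β ξ 0 + ∫ τ in (0:ℝ)..s,
      (AQ a μ (fun p => β p.1 p.2) (ξ, τ) + θ ξ τ) :=
  ae_restrict_of_ae h.2.2.2.2

lemma necess (H : Dat a μ μm μp) {θ β : (Fin d → ℝ) → ℝ → ℝ}
    (hθ : GoodF (fun p : (Fin d → ℝ) × ℝ => θ p.1 p.2)) (h : IsCellSol a μ θ β) :
    ∫ p, θ p.1 p.2 ∂(nuQ d) = 0 := by
  have hβ := sol_good h
  have hA := AQ_good H hβ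
  have iA := hA.mem.integrable one_le_two
  have iθ := hθ.mem.integrable one_le_two
  have h0 : ∫ p, (AQ a μ (fun p => β p.1 p.2) p + θ p.1 p.2) ∂(nuQ d) = 0 := by
    refine mean_zero (iA.add iθ) ?_
    filter_upwards [sol_eq h] with ξ hξ
    have h1 := hξ 1 ⟨zero_le_one, le_rfl⟩
    have h2 := h.2.2.1 ξ 0
    rw [zero_add] at h2
    rw [h2, ii_one] at h1
    simpa using h1
  rw [integral_add iA iθ, AQ_mean H hβ, zero_add] at h0
  exact h0

lemma suff (H : Dat a μ μm μp) {θ : (Fin d → ℝ) → ℝ → ℝ}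
    (hθ : GoodF (fun p : (Fin d → ℝ) × ℝ => θ p.1 p.2))
    (h0 : ∫ p, θ p.1 p.2 ∂(nuQ d) = 0) : ∃ β, IsCellSol a μ θ β := by
  obtain ⟨c, β, hβ, hper, heq⟩ := mild H hθ
  have hA := AQ_good H hβ
  have hP := (PQ_good hβ).const_mul c
  have iA := hA.mem.integrable one_le_two
  have iP := hP.mem.integrable one_le_two
  have iθ := hθ.mem.integrable one_le_two
  set m : ℝ → ℝ := fun τ => c * PQ β (0, τ) with hm
  have hmint : IntegrableOn m (Set.Ioo (0:ℝ) 1) := by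
    obtain ⟨ξ, hξ⟩ := (slice_int hP).exists
    exact hξ
  have hm0 : ∫ τ in Set.Ioo (0:ℝ) 1, m τ = 0 := by
    have h1 : ∫ p, (AQ a μ β p - c * PQ β p + θ p.1 p.2) ∂(nuQ d) = 0 := by
      refine mean_zero ((iA.sub iP).add iθ) ?_
      filter_upwards [heq] with ξ hξ
      have h1 := hξ 1 ⟨zero_le_one, le_rfl⟩
      have h2 := hper ξ 0
      rw [zero_add] at h2
      rw [h2, ii_one] at h1
      simpa using h1
    rw [integral_add (show Integrable (fun p => AQ a μ β p - c * PQ β p) (nuQ d) from iA.sub iP) iθ,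
      integral_sub iA iP, AQ_mean H hβ, h0] at h1
    have h2 : ∫ p, c * PQ β p ∂(nuQ d) = ∫ τ in Set.Ioo (0:ℝ) 1, m τ := by
      rw [nuQ] at iP ⊢
      rw [integral_prod _ iP]
      change ∫ ξ, (∫ τ in Set.Ioo (0:ℝ) 1, m τ) ∂(kap d) = _
      simp
    linarith
  set m' : ℝ → ℝ := Set.indicator (Set.Ioo (0:ℝ) 1) m with hm'
  have hm'int : Integrable m' := (integrable_indicator_iff measurableSet_Ioo).2 hmint
  have hmm : ∀ᵐ τ ∂(volume.restrict (Set.Ioo (0:ℝ) 1)), m' τ = m τ := by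
    filter_upwards [ae_restrict_mem measurableSet_Ioo] with τ hτ
    exact Set.indicator_of_mem hτ _
  set q : ℝ → ℝ := fun s => ∫ τ in (0:ℝ)..s, m' τ with hq
  have hqc : Continuous q := intervalIntegral.continuous_primitive
    (fun _ _ => hm'int.intervalIntegrable) 0
  have hq0 : q 0 = 0 := by simp [hq]
  have hq1 : q 1 = 0 := by
    simp only [hq]
    rw [ii_congr hmm ⟨zero_le_one, le_rfl⟩, ii_one, hm0]
  have hqf : ∀ s ∈ Set.Icc (0:ℝ) 1, q (Int.fract s) = q s := by
    intro s hs
    rcases hs.2.lt_or_eq with h | h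
    · rw [Int.fract_eq_self.2 ⟨hs.1, h⟩]
    · rw [h, Int.fract_one, hq0, hq1]
  have hqm : Measurable (fun p : (Fin d → ℝ) × ℝ => q (Int.fract p.2)) :=
    hqc.measurable.comp (measurable_fract.comp measurable_snd)
  obtain ⟨C, hC⟩ := isCompact_Icc.exists_bound_of_continuousOn (s := Set.Icc (0:ℝ) 1)
    hqc.continuousOn
  have hqg : GoodF (fun p : (Fin d → ℝ) × ℝ => q (Int.fract p.2)) := by
    refine ⟨hqm, fun ξ s k => rfl, MemLp.of_bound hqm.aestronglyMeasurable C ?_⟩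
    exact Filter.Eventually.of_forall fun p =>
      hC _ ⟨Int.fract_nonneg _, (Int.fract_lt_one _).le⟩
  have hβ' := hβ.add hqg
  set B : (Fin d → ℝ) × ℝ → ℝ := fun p => β p + q (Int.fract p.2) with hB
  have hAB : ∀ p, AQ a μ B p = AQ a μ β p := by
    intro p
    simp only [AQ, Aop, hB, add_sub_add_right_eq_sub]
  refine ⟨fun ξ s => B (ξ, s), hβ'.meas, fun ξ s k => hβ'.per ξ s k, fun ξ s => ?_, ?_, ?_⟩
  · simp only [hB, hper, Int.fract_add_one]
  · have := hβ'.mem.integrable_sq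
    rw [nuQ_eq] at this
    exact this
  · refine ae_of_ae_cube (P := fun ξ => ∀ s ∈ Set.Icc (0 : ℝ) 1,
      B (ξ, s) = B (ξ, 0) + ∫ τ in (0 : ℝ)..s, (AQ a μ B (ξ, τ) + θ ξ τ)) ?_ ?_
    · intro ξ k
      have e1 : ∀ s, B (ξ + fun i => (k i : ℝ), s) = B (ξ, s) := fun s => hβ'.per ξ s k
      have e2 : ∀ s, AQ a μ B (ξ + fun i => (k i : ℝ), s) = AQ a μ B (ξ, s) :=
        fun s => (AQ_good H hβ').per ξ s k
      have e3 : ∀ s, θ (ξ + fun i => (k i : ℝ)) s = θ ξ s := fun s => hθ.per ξ s k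
      simp only [e1, e2, e3]
    · filter_upwards [heq, slice_int ((hA.sub hP).add hθ)] with ξ hξ hIntg s hs
      have h1 := hξ s hs
      simp only [hAB]
      simp only [hB]
      rw [hqf s hs, Int.fract_zero, hq0, h1, add_zero, add_assoc]
      congr 1
      simp only [hq]
      rw [← intervalIntegral.integral_add (ii_int hIntg hs) hm'int.intervalIntegrable]
      refine ii_congr ?_ hs
      filter_upwards [hmm] with τ hτ
      rw [hτ]
      change _ - c * PQ β (ξ, τ) + _ + c * PQ β (ξ, τ) = _
      ring

lemma uniq (H : Dat a μ μm μp) {θ β₁ β₂ : (Fin d → ℝ) → ℝ → ℝ}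
    (hθ : GoodF (fun p : (Fin d → ℝ) × ℝ => θ p.1 p.2)) (s1 : IsCellSol a μ θ β₁)
    (s2 : IsCellSol a μ θ β₂) :
    ∃ c : ℝ, ∀ᵐ p ∂(nuQ d), β₁ p.1 p.2 - β₂ p.1 p.2 = c := by
  have g1 := sol_good s1
  have g2 := sol_good s2
  have hw := g1.sub g2
  have hab := AQ_sub H g1 g2
  set w : (Fin d → ℝ) × ℝ → ℝ := fun p => β₁ p.1 p.2 - β₂ p.1 p.2 with hwd
  have hAw := AQ_good H hw
  have heq : ∀ᵐ ξ ∂(kap d), ∀ s ∈ Set.Icc (0:ℝ) 1,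
      w (ξ, s) = w (ξ, 0) + ∫ τ in (0:ℝ)..s, AQ a μ w (ξ, τ) := by
    filter_upwards [sol_eq s1, sol_eq s2, slice_int ((AQ_good H g1).add hθ),
      slice_int ((AQ_good H g2).add hθ), ae_slices hab] with ξ h1 h2 i1 i2 h3 s hs
    have e : ∫ τ in (0:ℝ)..s, AQ a μ w (ξ, τ) =
        ∫ τ in (0:ℝ)..s, ((AQ a μ (fun p => β₁ p.1 p.2) (ξ, τ) + θ ξ τ) -
          (AQ a μ (fun p => β₂ p.1 p.2) (ξ, τ) + θ ξ τ)) := by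
      refine ii_congr ?_ hs
      filter_upwards [h3] with τ h3
      rw [h3]; ring
    rw [e, intervalIntegral.integral_sub (ii_int i1 hs) (ii_int i2 hs)]
    simp only [hwd]
    rw [h1 s hs, h2 s hs]
    ring
  have hen : ∫ p, AQ a μ w p * w p ∂(nuQ d) = 0 := by
    refine mean_zero (hAw.mem.integrable_mul hw.mem) ?_
    filter_upwards [heq, slice_int hAw] with ξ h1 h2
    have h3 : w (ξ, 1) = w (ξ, 0) := by
      have e1 := s1.2.2.1 ξ 0
      have e2 := s2.2.2.1 ξ 0
      rw [zero_add] at e1 e2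
      simp only [hwd, e1, e2]
    have := energy_one (u := fun s => w (ξ, s)) h2 h1 h3
    simpa only [mul_comm] using this
  obtain ⟨c, hc, hco⟩ := coercive H
  have h1 := hco w hw
  rw [hen] at h1
  have hX : ∫ q, dfQ w q ^ 2 ∂((kap d).prod (nuQ d)) ≤ 0 := by
    rw [df_kap hw]
    by_contra hcon
    push Not at hcon
    nlinarith
  obtain ⟨-, m2, m3⟩ := avg_lemma hw.df_meas (hw.df_mem (kap d))
  have hwP : ∀ᵐ p ∂(nuQ d), w p = PQ w p := by
    filter_upwards [sq_zero_ae m2 (m3.trans hX),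
      ((hw.mem_sh (kap d)).integrable one_le_two).prod_left_ae] with p h2 h3
    simp only [dfQ] at h2
    rw [integral_sub h3 (integrable_const _)] at h2
    rw [PQ_eq hw]
    simp at h2
    linarith
  have hA0 : ∀ᵐ p ∂(nuQ d), AQ a μ w p = 0 := by
    filter_upwards [AQ_congr H hw (PQ_good hw) hwP] with p hp
    rw [hp]
    simp [AQ, Aop, PQ]
  set k : ℝ := ∫ s in Set.Ioo (0:ℝ) 1, PQ w (0, s) with hk
  refine ⟨k, ?_⟩
  have hfin : ∀ᵐ ξ ∂(kap d), ∀ᵐ s ∂(volume.restrict (Set.Ioo (0:ℝ) 1)), w (ξ, s) = k := by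
    filter_upwards [heq, ae_slices hwP, ae_slices hA0] with ξ h1 h2 h3
    have h4 : ∀ s ∈ Set.Icc (0:ℝ) 1, w (ξ, s) = w (ξ, 0) := by
      intro s hs
      rw [h1 s hs, ii_congr h3 hs]
      simp
    have h5 : w (ξ, 0) = k := by
      have e1 : ∫ s in Set.Ioo (0:ℝ) 1, w (ξ, s) = k := integral_congr_ae h2
      rw [← e1, setIntegral_congr_fun measurableSet_Ioo
        (fun s hs => h4 s (Set.Ioo_subset_Icc_self hs))]
      simp
    filter_upwards [ae_restrict_mem measurableSet_Ioo] with s hs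
    rw [h4 s (Set.Ioo_subset_Icc_self hs), h5]
  rw [nuQ]
  exact (Measure.ae_prod_iff_ae_ae (measurableSet_eq_fun hw.meas measurable_const)).2 hfin

end


end

/-- The equation `∂_s β - A(s)β = θ` has a time-periodic solution
`β ∈ L²(𝕋^{d+1}) ∩ H¹((0,1); L²(𝕋^d))` iff `∫_{𝕋^{d+1}} θ = 0`; moreover any two
solutions differ by an additive constant. -/
theorem stmt9 {d : ℕ} (hd : 1 ≤ d)
    (a : (Fin d → ℝ) → ℝ) (μ : (Fin d → ℝ) → (Fin d → ℝ) → ℝ → ℝ) (μm μp : ℝ)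
    (hameas : Measurable a) (hanonneg : ∀ z, 0 ≤ a z)
    (haint : Integrable a) (hamass : ∫ z, a z = 1)
    (hamom : Integrable (fun z => ‖z‖ ^ 2 * a z))
    (hasymm : ∀ z, a (-z) = a z)
    (hμmeas : Measurable fun p : (Fin d → ℝ) × (Fin d → ℝ) × ℝ => μ p.1 p.2.1 p.2.2)
    (hμper₁ : ∀ ξ η s, ∀ k : Fin d → ℤ, μ (ξ + fun i => (k i : ℝ)) η s = μ ξ η s)
    (hμper₂ : ∀ ξ η s, ∀ k : Fin d → ℤ, μ ξ (η + fun i => (k i : ℝ)) s = μ ξ η s)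
    (hμper₃ : ∀ ξ η s, μ ξ η (s + 1) = μ ξ η s)
    (hμsymm : ∀ ξ η s, μ ξ η s = μ η ξ s)
    (hμm : 0 < μm) (hμlb : ∀ ξ η s, μm ≤ μ ξ η s) (hμub : ∀ ξ η s, μ ξ η s ≤ μp)
    (θ : (Fin d → ℝ) → ℝ → ℝ)
    (hθmeas : Measurable fun p : (Fin d → ℝ) × ℝ => θ p.1 p.2)
    (hθper₁ : ∀ ξ s, ∀ k : Fin d → ℤ, θ (ξ + fun i => (k i : ℝ)) s = θ ξ s)
    (hθper₂ : ∀ ξ s, θ ξ (s + 1) = θ ξ s)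
    (hθL2 : IntegrableOn (fun p : (Fin d → ℝ) × ℝ => (θ p.1 p.2) ^ 2)
      (cube d ×ˢ Set.Ioo (0 : ℝ) 1)) :
    ((∃ β, IsCellSol a μ θ β) ↔
      (∫ p in cube d ×ˢ Set.Ioo (0 : ℝ) 1, θ (Prod.fst p) (Prod.snd p)) = 0) ∧
    (∀ β₁ β₂, IsCellSol a μ θ β₁ → IsCellSol a μ θ β₂ →
      ∃ c : ℝ, ∀ᵐ p ∂(volume.restrict (cube d ×ˢ Set.Ioo (0 : ℝ) 1)),
        β₁ (Prod.fst p) (Prod.snd p) - β₂ (Prod.fst p) (Prod.snd p) = c) := by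
  have H : Dat a μ μm μp := ⟨hameas, hanonneg, haint, hamass, hasymm, hμmeas, hμper₁, hμper₂,
    hμsymm, hμm, hμlb, hμub⟩
  have hθ : GoodF (fun p : (Fin d → ℝ) × ℝ => θ p.1 p.2) := by
    refine ⟨hθmeas, fun ξ s k => hθper₁ ξ s k, ?_⟩
    rw [memLp_two_iff_integrable_sq hθmeas.aestronglyMeasurable, nuQ_eq]
    exact hθL2
  rw [← nuQ_eq]
  refine ⟨⟨fun ⟨β, hβ⟩ => necess H hθ hβ, fun h => suff H hθ h⟩, fun β₁ β₂ h1 h2 => ?_⟩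
  exact uniq H hθ h1 h2
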